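/- arXiv:2410.02418 — 4 statements merged into one kernel-verified Lean document; each statement's English description precedes it below -/
import Mathlib

section
/- Let N ∈ ℕ, N ≥ 4, β = i − 1 and D = {0, 1, −1, i, −i}. There are exactly 16 distinct Gaussian integers x ∈ ℤ[i] not divisible by β such that x has a 3-NAF (β, D)-representation containing exactly N nonzero digits and x has exactly r_N optimal representations, where (r_N) is defined by r_0 = r_1 = 1, r_2 = 3, r_3 = 8, r_4 = 17 and r_{N+3} = r_{N+2} + 2 r_{N+1} + 2 r_N for N ≥ 2. -/
/-!
Call a Gaussian integer odd if it is not divisible by `β`, and let `gC x m` be the number of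
normalized representations of `x` with `m` nonzero digits. Removing a trailing zero gives
`gC (βx) m = gC x m`. Splitting by the last digit gives, for a unit `e`,
`gC (e + βt) (m + 1) = gC t m + gC (-e + t) m + gC (-ie + t) m + gC (ieβ + t) m` (`gC_odd`).

By induction these recursions bound weights from below: prepending a unit as new last digit never
lowers the minimal weight (`gL_core`), and if it is followed by at least two zeros it raises the
minimal weight by one (`gL_naf`). In particular 3-NAFs have minimal weight, so the number of optimal
representations of an odd `x` with a 3-NAF of weight `N` is `gC x N`.

Let `u` be the last 3-NAF digit of `x`, and let `a, b, c, d` be the numbers of optimal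
representations of `x` with last digit `u, -u, -iu, iu`; their sum `F` is the number of all
optimal representations. When a new last digit `i ^ j * u` is put 3, 4 or at least 5 positions
below, the vector `(a, b, c, d)` changes by an explicit nonnegative linear map depending only on
`j` and on which of these distances occurs (`gSt.step`, `gFits.step`).

At distance 3 the ratios `-1` and `-i` give `F + 2a + 2c` and `F + 2a + 2d` optimal
representations. If `x` has weight `N ≥ 4` then `F ≤ r_N`, `a ≤ r_{N-1}` and `c, d ≤ r_{N-2}`,
which matches the recurrence of `r`; every other step stays strictly below `r_{N+1}`. The inequalities
which propagate are collected in `gInv`, and exactly one of `c`, `d` reaches `r_{N-2}` when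
`F = r_N`. So each maximizer of weight `N` extends in exactly one way to a maximizer of weight
`N + 1` (`gX_succ`). A finite check at weight 4 (`base_words`) starts the induction and shows that
there are 4 extremal patterns, hence with the free choice of the leading unit 16 maximizers.
-/

open Matrix

noncomputable section

/-- The imaginary unit `i` in the Gaussian integers. -/
def gI : GaussianInt := ⟨0, 1⟩

/-- The base `β = i - 1`. -/
def gβ : GaussianInt := ⟨-1, 1⟩

/-- The digit set `D = {0, 1, -1, i, -i}`. -/
def gD : Set GaussianInt := {0, 1, -1, gI, -gI}

/-- Value of a digit string `d_{n-1} ⋯ d_0`, given as a list with the least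
significant digit first: `gval [d_0, d_1, …, d_{n-1}] = Σ d_j β^j`. -/
def gval (l : List GaussianInt) : GaussianInt :=
  l.foldr (fun d acc => d + gβ * acc) 0

/-- `l` (least significant digit first) is a `(β, D)`-representation of `x`. -/
def gIsRep (x : GaussianInt) (l : List GaussianInt) : Prop :=
  (∀ d ∈ l, d ∈ gD) ∧ gval l = x

/-- A representation is normalized if it is empty or its leading digit
(the last entry of the LSD-first list) is nonzero. -/
def gNormalized (l : List GaussianInt) : Prop := l.getLast? ≠ some 0

/-- Number of nonzero digits (Hamming weight). -/
def gweight (l : List GaussianInt) : ℕ := (l.filter (fun d => d ≠ 0)).length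

/-- `W`-NAF property: among any `W` consecutive digits at most one is nonzero. -/
def gNAF (W : ℕ) (l : List GaussianInt) : Prop :=
  ∀ j k : ℕ, j < k → k < j + W → l.getD j 0 ≠ 0 → l.getD k 0 = 0

/-- A representation of `x` is optimal if it is normalized and its number of
nonzero digits is minimal among all representations of `x`. -/
def gOptimal (x : GaussianInt) (l : List GaussianInt) : Prop :=
  gIsRep x l ∧ gNormalized l ∧
    ∀ l' : List GaussianInt, gIsRep x l' → gweight l ≤ gweight l'

/-- The number of optimal representations of `x`. -/
def gnumOpt (x : GaussianInt) : ℕ := Nat.card {l : List GaussianInt // gOptimal x l}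

/-- The sequence `r_N`: `r_0 = r_1 = 1`, `r_2 = 3`, `r_3 = 8`, `r_4 = 17`,
and `r_{N+3} = r_{N+2} + 2 r_{N+1} + 2 r_N` for `N ≥ 2`. -/
def rseq : ℕ → ℕ
  | 0 => 1
  | 1 => 1
  | 2 => 3
  | 3 => 8
  | 4 => 17
  | (n + 5) => rseq (n + 4) + 2 * rseq (n + 3) + 2 * rseq (n + 2)


/-! ### Arithmetic of units and of the base -/

/-- The nonzero digits, which are the units of `ℤ[i]`. -/
def gU (e : GaussianInt) : Prop := e = 1 ∨ e = -1 ∨ e = gI ∨ e = -gI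

lemma gI_mul : gI * gI = -1 := by
  simp [gI, Zsqrtd.ext_iff]

lemma gβ_eq : gβ = gI - 1 := by
  simp [gI, gβ, Zsqrtd.ext_iff]

lemma gβ_ne : gβ ≠ 0 := by
  simp [gβ, Zsqrtd.ext_iff]

lemma gU.neg {e : GaussianInt} (h : gU e) : gU (-e) := by
  rcases h with rfl | rfl | rfl | rfl <;> simp [gU]

lemma gU.I_mul {e : GaussianInt} (h : gU e) : gU (gI * e) := by
  rcases h with rfl | rfl | rfl | rfl <;> simp [gU, gI_mul]

lemma gU.I_pow_mul {e : GaussianInt} (h : gU e) (j : ℕ) : gU (gI ^ j * e) := by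
  induction j with
  | zero => simpa using h
  | succ j ih => rw [pow_succ', mul_assoc]; exact ih.I_mul

lemma gU.ne_zero {e : GaussianInt} (h : gU e) : e ≠ 0 := by
  rcases h with rfl | rfl | rfl | rfl <;> simp [gI, Zsqrtd.ext_iff]

lemma gU.mem {e : GaussianInt} (h : gU e) : e ∈ gD := by
  rcases h with rfl | rfl | rfl | rfl <;> simp [gD]

lemma gU_of_mem {d : GaussianInt} (h : d ∈ gD) (h0 : d ≠ 0) : gU d := by
  simp only [gD, Set.mem_insert_iff, Set.mem_singleton_iff] at h
  rcases h with h | h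
  · exact absurd h h0
  · exact h

/-- Every unit is one of `e`, `-e`, `ie`, `-ie`. -/
lemma gU.cases {e d : GaussianInt} (he : gU e) (hd : gU d) :
    d = e ∨ d = -e ∨ d = gI * e ∨ d = -(gI * e) := by
  rcases he with rfl | rfl | rfl | rfl <;> rcases hd with rfl | rfl | rfl | rfl <;>
    simp [gI_mul]

lemma gβ_mul (t : GaussianInt) : gβ * t = ⟨-t.re - t.im, t.re - t.im⟩ := by
  simp [gβ, Zsqrtd.ext_iff]; constructor <;> ring

lemma gβ_dvd_iff (x : GaussianInt) : gβ ∣ x ↔ (x.re + x.im) % 2 = 0 := by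
  constructor
  · rintro ⟨t, rfl⟩
    rw [gβ_mul]; simp only; omega
  · intro h
    refine ⟨⟨(x.im - x.re) / 2, -((x.im + x.re) / 2)⟩, ?_⟩
    rw [gβ_mul, Zsqrtd.ext_iff]
    constructor <;> simp only <;> omega

lemma gU.parity {e : GaussianInt} (h : gU e) : (e.re + e.im) % 2 = 1 := by
  rcases h with rfl | rfl | rfl | rfl <;> simp [gI]

lemma gU.not_dvd {e : GaussianInt} (h : gU e) (t : GaussianInt) : ¬ gβ ∣ e + gβ * t := by
  rw [dvd_add_left (dvd_mul_right _ _), gβ_dvd_iff]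
  have := h.parity
  omega

lemma gU.split {e : GaussianInt} (h : gU e) (x : GaussianInt) :
    (∃ t, x = gβ * t) ∨ ∃ t, x = e + gβ * t := by
  by_cases hx : gβ ∣ x
  · exact Or.inl hx
  · right
    have : gβ ∣ x - e := by
      rw [gβ_dvd_iff] at hx ⊢
      have := h.parity
      simp only [Zsqrtd.re_sub, Zsqrtd.im_sub]
      omega
    obtain ⟨t, ht⟩ := this
    exact ⟨t, by rw [← ht]; ring⟩

/-- The four units are pairwise incongruent modulo `β ^ 3`. -/
lemma gU.eq_of_congr {e f y z : GaussianInt} (he : gU e) (hf : gU f)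
    (h : e + gβ ^ 3 * y = f + gβ ^ 3 * z) : e = f := by
  have h3 : gβ ^ 3 = ⟨2, 2⟩ := by
    simp [gβ, pow_succ, Zsqrtd.ext_iff]
  rw [h3, Zsqrtd.ext_iff] at h
  rcases he with rfl | rfl | rfl | rfl <;> rcases hf with rfl | rfl | rfl | rfl <;>
    first
    | rfl
    | (exfalso; simp [gI] at h; omega)

/-! ### Counting representations of given weight -/

/-- The normalized representations of `x` with exactly `m` nonzero digits. -/
def gS (x : GaussianInt) (m : ℕ) : Set (List GaussianInt) :=
  {l | gIsRep x l ∧ gNormalized l ∧ gweight l = m}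

/-- The number of normalized representations of `x` with exactly `m` nonzero digits, as an
extended natural number, so that no finiteness has to be established beforehand. -/
def gC (x : GaussianInt) (m : ℕ) : ℕ∞ := (gS x m).encard

lemma gval_cons (d : GaussianInt) (l : List GaussianInt) :
    gval (d :: l) = d + gβ * gval l := rfl

lemma gweight_cons_zero (l : List GaussianInt) : gweight (0 :: l) = gweight l := by
  simp [gweight]

lemma gweight_cons {d : GaussianInt} (hd : d ≠ 0) (l : List GaussianInt) :
    gweight (d :: l) = gweight l + 1 := by
  simp [gweight, hd]

lemma gIsRep_cons (x d : GaussianInt) (l : List GaussianInt) :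
    gIsRep x (d :: l) ↔ d ∈ gD ∧ gIsRep (gval l) l ∧ d + gβ * gval l = x := by
  simp [gIsRep, gval_cons, and_assoc]

lemma gNormalized_cons {d : GaussianInt} (hd : d ≠ 0) (l : List GaussianInt) :
    gNormalized (d :: l) ↔ gNormalized l := by
  cases l with
  | nil => simp [gNormalized, hd]
  | cons a l => simp [gNormalized, List.getLast?_cons_cons]

lemma gNormalized_cons_zero (l : List GaussianInt) (hl : l ≠ []) :
    gNormalized (0 :: l) ↔ gNormalized l := by
  cases l with
  | nil => exact absurd rfl hl
  | cons a l => simp [gNormalized, List.getLast?_cons_cons]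

lemma gval_of_weight_zero (l : List GaussianInt) (h : gweight l = 0) : gval l = 0 := by
  induction l with
  | nil => rfl
  | cons d l ih =>
    by_cases hd : d = 0
    · subst hd
      rw [gweight_cons_zero] at h
      simp [gval_cons, ih h]
    · rw [gweight_cons hd] at h
      omega

/-- Dropping leading zeros turns any representation into a normalized one. -/
lemma exists_normalized (l : List GaussianInt) (hl : ∀ d ∈ l, d ∈ gD) :
    ∃ l', gIsRep (gval l) l' ∧ gNormalized l' ∧ gweight l' = gweight l := by
  induction l with
  | nil => exact ⟨[], ⟨by simp, rfl⟩, by simp [gNormalized], rfl⟩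
  | cons d l ih =>
    obtain ⟨l', h1, h2, h3⟩ := ih (fun a ha => hl a (by simp [ha]))
    have hv : gval l' = gval l := h1.2
    have hd : d ∈ gD := hl d (by simp)
    by_cases h0 : d = 0
    · subst h0
      by_cases hn : l' = []
      · subst hn
        refine ⟨[], ⟨by simp, ?_⟩, h2, ?_⟩
        · rw [gval_cons, ← hv]; simp [gval]
        · rw [gweight_cons_zero, h3]
      · refine ⟨0 :: l', ⟨?_, ?_⟩, (gNormalized_cons_zero _ hn).2 h2, ?_⟩
        · simpa [hd] using h1.1
        · rw [gval_cons, gval_cons, hv]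
        · rw [gweight_cons_zero, gweight_cons_zero, h3]
    · refine ⟨d :: l', ⟨?_, ?_⟩, (gNormalized_cons h0 _).2 h2, ?_⟩
      · simpa [hd] using h1.1
      · rw [gval_cons, gval_cons, hv]
      · rw [gweight_cons h0, gweight_cons h0, h3]

lemma gC_zero_zero : gC 0 0 = 1 := by
  have : gS 0 0 = {[]} := by
    ext l
    simp only [gS, Set.mem_ofPred_eq, Set.mem_singleton_iff]
    constructor
    · rintro ⟨-, h2, h3⟩
      by_contra hl
      have hm : l.getLast hl ∈ l.filter (fun d => d ≠ 0) := by
        refine List.mem_filter.2 ⟨List.getLast_mem hl, ?_⟩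
        rw [gNormalized, List.getLast?_eq_some_getLast hl] at h2
        simpa using h2
      rw [gweight, List.length_eq_zero_iff] at h3
      rw [h3] at hm
      simp at hm
    · rintro rfl
      exact ⟨⟨by simp, rfl⟩, by simp [gNormalized], rfl⟩
  rw [gC, this, Set.encard_singleton]

lemma gC_mul_gβ (x : GaussianInt) (m : ℕ) : gC (gβ * x) m = gC x m := by
  rcases eq_or_ne x 0 with rfl | hx
  · simp
  have : gS (gβ * x) m = (List.cons 0) '' gS x m := by
    ext l
    simp only [gS, Set.mem_ofPred_eq, Set.mem_image]
    constructor
    · rintro ⟨h1, h2, h3⟩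
      cases l with
      | nil =>
        have := h1.2
        simp only [gval, List.foldr_nil] at this
        exact absurd this.symm (mul_ne_zero gβ_ne hx)
      | cons d l =>
        obtain ⟨hd, h1r, hv⟩ := (gIsRep_cons _ _ _).1 h1
        have hd0 : d = 0 := by
          by_contra h0
          exact (gU_of_mem hd h0).not_dvd (gval l) (hv ▸ dvd_mul_right _ _)
        subst hd0
        have hv' : gval l = x := mul_left_cancel₀ gβ_ne (by simpa using hv)
        have hl : l ≠ [] := by
          rintro rfl
          exact hx (by simpa [gval] using hv'.symm)
        refine ⟨l, ⟨hv' ▸ h1r, (gNormalized_cons_zero _ hl).1 h2, ?_⟩, rfl⟩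
        rwa [gweight_cons_zero] at h3
    · rintro ⟨l, ⟨h1, h2, h3⟩, rfl⟩
      have hl : l ≠ [] := by
        rintro rfl
        exact hx (by simpa [gval] using h1.2.symm)
      refine ⟨(gIsRep_cons _ _ _).2 ⟨by simp [gD], ?_, ?_⟩, (gNormalized_cons_zero _ hl).2 h2, ?_⟩
      · rw [h1.2]; exact h1
      · rw [h1.2]; simp
      · rwa [gweight_cons_zero]
  rw [gC, this, Function.Injective.encard_image (List.cons_injective), gC]

lemma gC_pow_mul (k : ℕ) (x : GaussianInt) (m : ℕ) : gC (gβ ^ k * x) m = gC x m := by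
  induction k with
  | zero => simp
  | succ k ih => rw [pow_succ', mul_assoc, gC_mul_gβ, ih]

lemma gC_odd_zero {e : GaussianInt} (he : gU e) (t : GaussianInt) : gC (e + gβ * t) 0 = 0 := by
  rw [gC, Set.encard_eq_zero, Set.eq_empty_iff_forall_notMem]
  rintro l ⟨h1, -, h3⟩
  have := gval_of_weight_zero l h3
  rw [h1.2] at this
  exact he.not_dvd t (this ▸ dvd_zero _)

/-- Splitting the representations of an odd number according to their last digit
`e`, `-e`, `ie` or `-ie`. -/
lemma gC_odd {e : GaussianInt} (he : gU e) (t : GaussianInt) (m : ℕ) :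
    gC (e + gβ * t) (m + 1) =
      gC t m + gC (-e + t) m + gC (-(gI * e) + t) m + gC (gI * e * gβ + t) m := by
  have hI := gI_mul
  have key : ∀ d s : GaussianInt, gU d → d + gβ * s = e + gβ * t → ∀ l,
      d :: l ∈ gS (e + gβ * t) (m + 1) ↔ l ∈ gS s m := by
    intro d s hd hs l
    simp only [gS, Set.mem_ofPred_eq, gIsRep_cons, gNormalized_cons hd.ne_zero,
      gweight_cons hd.ne_zero, add_left_inj, hd.mem, true_and]
    have : (d + gβ * gval l = e + gβ * t) ↔ gval l = s := by
      rw [← hs, add_right_inj, mul_right_inj' gβ_ne]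
    rw [this]
    constructor
    · rintro ⟨⟨h1, h2⟩, h3⟩
      exact ⟨h2 ▸ h1, h3⟩
    · rintro ⟨h1, h3⟩
      exact ⟨⟨by rw [h1.2]; exact h1, h1.2⟩, h3⟩
  have k1 := key e t he rfl
  have k2 := key (-e) (gI * e * gβ + t) he.neg (by
    rw [gβ_eq]; linear_combination (gI * e - 2 * e) * hI)
  have k3 := key (gI * e) (-e + t) he.I_mul (by rw [gβ_eq]; ring)
  have k4 := key (-(gI * e)) (-(gI * e) + t) he.I_mul.neg (by
    rw [gβ_eq]; linear_combination (-e) * hI)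
  have hset : gS (e + gβ * t) (m + 1) =
      ((List.cons e '' gS t m ∪ List.cons (gI * e) '' gS (-e + t) m) ∪
        List.cons (-(gI * e)) '' gS (-(gI * e) + t) m) ∪
        List.cons (-e) '' gS (gI * e * gβ + t) m := by
    ext l
    simp only [Set.mem_union, Set.mem_image]
    constructor
    · intro h
      cases l with
      | nil => simp [gS, gweight] at h
      | cons d l =>
        obtain ⟨hd, -, hv⟩ := (gIsRep_cons _ _ _).1 h.1
        have hd0 : d ≠ 0 := by
          rintro rfl
          exact he.not_dvd t (by rw [← hv]; simp)
        rcases he.cases (gU_of_mem hd hd0) with rfl | rfl | rfl | rfl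
        · exact Or.inl (Or.inl (Or.inl ⟨l, (k1 l).1 h, rfl⟩))
        · exact Or.inr ⟨l, (k2 l).1 h, rfl⟩
        · exact Or.inl (Or.inl (Or.inr ⟨l, (k3 l).1 h, rfl⟩))
        · exact Or.inl (Or.inr ⟨l, (k4 l).1 h, rfl⟩)
    · rintro (((⟨l, h, rfl⟩ | ⟨l, h, rfl⟩) | ⟨l, h, rfl⟩) | ⟨l, h, rfl⟩)
      · exact (k1 l).2 h
      · exact (k3 l).2 h
      · exact (k4 l).2 h
      · exact (k2 l).2 h
  have hdisj : ∀ (d d' : GaussianInt) (A B : Set (List GaussianInt)), d ≠ d' →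
      Disjoint (List.cons d '' A) (List.cons d' '' B) := by
    intro d d' A B hne
    rw [Set.disjoint_left]
    rintro _ ⟨l, -, rfl⟩ ⟨l', -, h⟩
    exact hne (List.cons.inj h).1.symm
  have n1 : e ≠ gI * e := by
    rcases he with rfl | rfl | rfl | rfl <;> simp [gI, Zsqrtd.ext_iff]
  have n2 : e ≠ -(gI * e) := by
    rcases he with rfl | rfl | rfl | rfl <;> simp [gI, Zsqrtd.ext_iff]
  have n3 : gI * e ≠ -(gI * e) := by
    rcases he with rfl | rfl | rfl | rfl <;> simp [gI, Zsqrtd.ext_iff]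
  have n4 : e ≠ -e := by
    rcases he with rfl | rfl | rfl | rfl <;> simp [gI, Zsqrtd.ext_iff]
  have n5 : gI * e ≠ -e := by
    rcases he with rfl | rfl | rfl | rfl <;> simp [gI, Zsqrtd.ext_iff]
  have n6 : -(gI * e) ≠ -e := fun h => n1 (neg_injective h).symm
  rw [gC, hset, Set.encard_union_eq, Set.encard_union_eq, Set.encard_union_eq,
    (List.cons_injective).encard_image, (List.cons_injective).encard_image,
    (List.cons_injective).encard_image, (List.cons_injective).encard_image]
  · rfl
  · exact hdisj _ _ _ _ n1
  · rw [Set.disjoint_union_left]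
    exact ⟨hdisj _ _ _ _ n2, hdisj _ _ _ _ n3⟩
  · rw [Set.disjoint_union_left, Set.disjoint_union_left]
    exact ⟨⟨hdisj _ _ _ _ n4, hdisj _ _ _ _ n5⟩, hdisj _ _ _ _ n6⟩

/-! ### Lower bounds for the weight -/

/-- Every representation of `x` has at least `n` nonzero digits. -/
def gL (x : GaussianInt) (n : ℕ) : Prop := ∀ m < n, gC x m = 0

lemma gL.mono {x : GaussianInt} {n k : ℕ} (h : gL x n) (hk : k ≤ n) : gL x k :=
  fun m hm => h m (by omega)

lemma gL_mul_gβ {x : GaussianInt} {n : ℕ} : gL (gβ * x) n ↔ gL x n := by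
  simp [gL, gC_mul_gβ]

lemma gL_pow_mul {x : GaussianInt} {n : ℕ} (k : ℕ) : gL (gβ ^ k * x) n ↔ gL x n := by
  simp [gL, gC_pow_mul]

/-- Removing any last digit from an odd number lowers the weight by at most one. -/
lemma gL_odd {e : GaussianInt} (he : gU e) {t : GaussianInt} {n : ℕ}
    (h : gL (e + gβ * t) (n + 1)) :
    gL t n ∧ gL (-e + t) n ∧ gL (-(gI * e) + t) n ∧ gL (gI * e * gβ + t) n := by
  have h' : ∀ m < n, gC t m = 0 ∧ gC (-e + t) m = 0 ∧ gC (-(gI * e) + t) m = 0 ∧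
      gC (gI * e * gβ + t) m = 0 := by
    intro m hm
    have := h (m + 1) (by omega)
    rw [gC_odd he] at this
    simpa [add_eq_zero, and_assoc] using this
  exact ⟨fun m hm => (h' m hm).1, fun m hm => (h' m hm).2.1, fun m hm => (h' m hm).2.2.1,
    fun m hm => (h' m hm).2.2.2⟩

lemma gL_odd_of {e : GaussianInt} (he : gU e) {t : GaussianInt} {n : ℕ}
    (h1 : gL t n) (h2 : gL (-e + t) n) (h3 : gL (-(gI * e) + t) n)
    (h4 : gL (gI * e * gβ + t) n) : gL (e + gβ * t) (n + 1) := by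
  intro m hm
  cases m with
  | zero => exact gC_odd_zero he t
  | succ m =>
    have hm' : m < n := by omega
    rw [gC_odd he, h1 m hm', h2 m hm', h3 m hm', h4 m hm']
    simp

/-- If prepending a unit never lowers the weight `n`, then adding a unit lowers a weight `n + 1`
by at most one. -/
lemma gL_add_aux {n : ℕ} (core : ∀ y e, gU e → gL y n → gL (e + gβ * y) n)
    {y e : GaussianInt} (he : gU e) (h : gL y (n + 1)) : gL (e + y) n := by
  rcases he.neg.split y with ⟨t, rfl⟩ | ⟨t, rfl⟩
  · exact core t e he ((gL_mul_gβ.1 h).mono (by omega))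
  · have := (gL_odd he.neg h).1
    rw [show e + (-e + gβ * t) = gβ * t by ring]
    exact gL_mul_gβ.2 this

/-- Prepending a unit digit does not lower the weight. -/
lemma gL_core (n : ℕ) : ∀ y e, gU e → gL y n → gL (e + gβ * y) n := by
  induction n using Nat.strong_induction_on with
  | _ n ih =>
    intro y e he h
    cases n with
    | zero => intro m hm; omega
    | succ n =>
      have ihn := ih n (by omega)
      have ha := fun {f : GaussianInt} (hf : gU f) => gL_add_aux ihn hf h
      refine gL_odd_of he (h.mono (by omega)) (ha he.neg) (ha he.I_mul.neg) ?_
      have hf := he.I_mul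
      generalize gI * e = f at hf
      have h1 : gU 1 := Or.inl rfl
      rcases h1.split y with ⟨t, rfl⟩ | ⟨t, rfl⟩
      · rw [show f * gβ + gβ * t = gβ * (f + t) by ring, gL_mul_gβ]
        exact gL_add_aux ihn hf (gL_mul_gβ.1 h)
      · cases n with
        | zero => intro m hm; omega
        | succ n =>
          have hb := fun {z : GaussianInt} (hz : gL z (n + 1)) =>
            gL_add_aux (ih n (by omega)) hf hz
          obtain ⟨g1, g2, g3, g4⟩ := gL_odd h1 h
          rw [show f * gβ + (1 + gβ * t) = 1 + gβ * (f + t) by ring]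
          refine gL_odd_of h1 (hb g1) ?_ ?_ ?_
          · rw [add_left_comm]; exact hb g2
          · rw [add_left_comm]; exact hb g3
          · rw [add_left_comm]; exact hb g4

lemma gL_prepend {y : GaussianInt} {n : ℕ} (h : gL y n) {e : GaussianInt} (he : gU e) (k : ℕ) :
    gL (e + gβ ^ (k + 1) * y) n := by
  rw [pow_succ', mul_assoc]
  exact gL_core n _ e he ((gL_pow_mul k).2 h)

/-- A unit digit followed by at least two zeros raises the weight by one; hence 3-NAFs are
optimal. -/
lemma gL_naf {y : GaussianInt} {n : ℕ} (h : gL y n) {e : GaussianInt} (he : gU e) (k : ℕ) :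
    gL (e + gβ ^ (k + 3) * y) (n + 1) := by
  rw [show e + gβ ^ (k + 3) * y = e + gβ * (gβ ^ (k + 2) * y) by ring]
  refine gL_odd_of he ((gL_pow_mul _).2 h) (gL_prepend h he.neg _)
    (gL_prepend h he.I_mul.neg _) ?_
  rw [show gI * e * gβ + gβ ^ (k + 2) * y = gβ * (gI * e + gβ ^ (k + 1) * y) by ring, gL_mul_gβ]
  exact gL_prepend h he.I_mul _

/-! ### Carries against a 3-NAF -/

lemma gC_carry_one {y : GaussianInt} {n : ℕ} (h : gL y (n + 1)) {e : GaussianInt} (he : gU e) :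
    gC (e + gβ * y) (n + 1) =
      gC (-e + y) n + gC (-(gI * e) + y) n + gC (gI * e * gβ + y) n := by
  rw [gC_odd he, h n (by omega), zero_add]

lemma gC_carry_two {y : GaussianInt} {n : ℕ} (h : gL y (n + 1)) {e : GaussianInt} (he : gU e) :
    gC (e + gβ ^ 2 * y) (n + 1) = gC (gI * e + y) n := by
  have hz := gL_mul_gβ.2 h
  rw [show e + gβ ^ 2 * y = e + gβ * (gβ * y) by ring, gC_carry_one hz he,
    gL_core _ y _ he.neg h n (by omega), gL_core _ y _ he.I_mul.neg h n (by omega),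
    show gI * e * gβ + gβ * y = gβ * (gI * e + y) by ring, gC_mul_gβ]
  simp

lemma gC_carry_far {y : GaussianInt} {n : ℕ} (h : gL y (n + 1)) {e : GaussianInt} (he : gU e)
    (k : ℕ) : gC (e + gβ ^ (k + 3) * y) (n + 1) = 0 :=
  gL_naf h he k (n + 1) (by omega)

/-- The effect of a carry `e` at the position next to the last digit `v`. -/
lemma gC_carry_second {y : GaussianInt} {n : ℕ} (h : gL y (n + 1)) {e v : GaussianInt}
    (he : gU e) (hv : gU v) (k : ℕ) :
    gC (e * gβ + (v + gβ ^ (k + 3) * y)) (n + 1) =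
      gC (e - v + gβ ^ (k + 2) * y) n + gC (e - gI * v + gβ ^ (k + 2) * y) n := by
  have h1 : gC (e + gβ ^ (k + 2) * y) n = 0 := gL_prepend h he (k + 1) n (by omega)
  have h2 : gC (gI * v * gβ + (e + gβ ^ (k + 2) * y)) n = 0 := by
    rw [show gI * v * gβ + (e + gβ ^ (k + 2) * y) =
      e + gβ * (gI * v + gβ ^ (k + 1) * y) by ring]
    exact gL_core _ _ _ he (gL_prepend h hv.I_mul k) n (by omega)
  rw [show e * gβ + (v + gβ ^ (k + 3) * y) = v + gβ * (e + gβ ^ (k + 2) * y) by ring,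
    gC_odd hv, h1, h2, zero_add, add_zero]
  congr 2 <;> ring

/-- The four digit-resolved counts of an odd number `x` with last 3-NAF digit `u` and 3-NAF weight
`n + 1`: the numbers of optimal representations of `x` with last digit `u`, `-u`, `-iu` and `iu`,
that is, of representations of weight `n` of `x - u`, `x + u`, `x + iu` and `x - iu`. -/
structure gSt where
  a : ℕ
  b : ℕ
  c : ℕ
  d : ℕ

/-- The total number of optimal representations. -/
def gSt.F (s : gSt) : ℕ := s.a + s.b + s.c + s.d

/-- The effect on the digit-resolved counts of prepending a new last digit. The first argument tells
whether the new digit is 3, 4, or at least 5 positions below the old one, the second one is the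
exponent `j` in the new digit `i ^ j * u`. -/
def gSt.step : Fin 3 → Fin 4 → gSt → gSt
  | 0, 0, s => ⟨s.F, s.b + 2 * s.d, s.b, s.d⟩
  | 0, 1, s => ⟨s.F, s.b + 2 * s.c, s.c, s.b⟩
  | 0, 2, s => ⟨s.F, s.a + s.c, s.a, s.c⟩
  | 0, 3, s => ⟨s.F, s.a + s.d, s.d, s.a⟩
  | 1, 0, s => ⟨s.F, s.a, 0, 0⟩
  | 1, 1, s => ⟨s.F, s.d, 0, 0⟩
  | 1, 2, s => ⟨s.F, s.b, 0, 0⟩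
  | 1, 3, s => ⟨s.F, s.c, 0, 0⟩
  | 2, _, s => ⟨s.F, 0, 0, 0⟩

/-- `s` is the vector of digit-resolved counts of `x`, whose last 3-NAF digit is `u` and whose
3-NAF weight is `n + 1`. The fields `ha'`, …, `hd'` count the representations of weight `n` after
a carry into the second position; they turn out to be determined by `s`. -/
structure gFits (n : ℕ) (u x : GaussianInt) (s : gSt) : Prop where
  hu : gU u
  low : gL x (n + 1)
  res : ∃ z, x = u + gβ ^ 3 * z
  ha : gC (-u + x) n = s.a
  hb : gC (u + x) n = s.b
  hc : gC (gI * u + x) n = s.c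
  hd : gC (-(gI * u) + x) n = s.d
  ha' : gC (-u * gβ + x) n = s.d
  hb' : gC (u * gβ + x) n = 0
  hc' : gC (gI * u * gβ + x) n = 0
  hd' : gC (-(gI * u) * gβ + x) n = s.c

lemma gFits.total {n : ℕ} {u x : GaussianInt} {s : gSt} (h : gFits n u x s) :
    gC x (n + 1) = s.F := by
  have hI := gI_mul
  obtain ⟨z, hz⟩ := h.res
  have hx : x = u + gβ * (gβ ^ 2 * z) := by rw [hz]; ring
  have e1 : gβ * (gβ ^ 2 * z) = -u + x := by rw [hx]; ring
  have e2 : gβ * (-u + gβ ^ 2 * z) = -(gI * u) + x := by rw [mul_add, e1, gβ_eq]; ring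
  have e3 : gβ * (-(gI * u) + gβ ^ 2 * z) = gI * u + x := by
    rw [mul_add, e1, gβ_eq]; linear_combination (-u) * hI
  have e4 : gβ * (gI * u * gβ + gβ ^ 2 * z) = u + x := by
    rw [mul_add, e1, gβ_eq]; linear_combination (gI * u - 2 * u) * hI
  conv_lhs => rw [hx]
  rw [gC_odd h.hu, ← gC_mul_gβ (gβ ^ 2 * z), ← gC_mul_gβ (-u + gβ ^ 2 * z),
    ← gC_mul_gβ (-(gI * u) + gβ ^ 2 * z), ← gC_mul_gβ (gI * u * gβ + gβ ^ 2 * z), e1, e2, e3, e4,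
    h.ha, h.hb, h.hc, h.hd, gSt.F]
  push_cast
  ring

lemma gFits_base {u : GaussianInt} (hu : gU u) : gFits 0 u u ⟨1, 0, 0, 0⟩ := by
  have hI := gI_mul
  have hodd : ∀ t, gC (t * gβ + u) 0 = 0 := fun t => by
    rw [add_comm, mul_comm]; exact gC_odd_zero hu t
  have hU : ∀ e, gU e → gC e 0 = 0 := fun e he => by
    simpa using gC_odd_zero he 0
  refine ⟨hu, ?_, ⟨0, by simp⟩, ?_, ?_, ?_, ?_, ?_, ?_, ?_, ?_⟩
  · have h0 : gL 0 0 := fun m hm => by omega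
    simpa using gL_naf h0 hu 0
  · simpa using gC_zero_zero
  · rw [show u + u = gβ ^ 2 * (gI * u) by
      rw [gβ_eq]; linear_combination (2 * u - gI * u) * hI, gC_pow_mul, hU _ hu.I_mul]; rfl
  · rw [show gI * u + u = gβ * (-(gI * u)) by
      rw [gβ_eq]; linear_combination u * hI, gC_mul_gβ, hU _ hu.I_mul.neg]; rfl
  · rw [show -(gI * u) + u = gβ * (-u) by rw [gβ_eq]; ring, gC_mul_gβ, hU _ hu.neg]; rfl
  all_goals rw [hodd]; try rfl

section step

variable {n : ℕ} {y v : GaussianInt}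

lemma sum_double (v w : GaussianInt) (k : ℕ) :
    v + (v + gβ ^ (k + 2) * w) = gβ ^ 2 * (gI * v + gβ ^ k * w) := by
  have e : gβ ^ 2 * gI = 2 := by
    rw [gβ_eq]; linear_combination (gI - 2) * gI_mul
  linear_combination (-v) * e

lemma sum_I (v w : GaussianInt) (k : ℕ) :
    gI * v + (v + gβ ^ (k + 1) * w) = gβ * (-(gI * v) + gβ ^ k * w) := by
  rw [mul_add, ← mul_assoc, ← pow_succ', ← add_assoc, add_left_inj, gβ_eq]
  linear_combination v * gI_mul

lemma sum_neg_I (v w : GaussianInt) (k : ℕ) :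
    -(gI * v) + (v + gβ ^ (k + 1) * w) = gβ * (-v + gβ ^ k * w) := by
  rw [mul_add, ← mul_assoc, ← pow_succ', ← add_assoc, add_left_inj, gβ_eq]
  ring

lemma gC_second_pos (h : gL y (n + 1)) (hv : gU v) (k : ℕ) :
    gC (v * gβ + (v + gβ ^ (k + 3) * y)) (n + 1) = 0 := by
  rw [gC_carry_second h hv hv,
    show v - v + gβ ^ (k + 2) * y = gβ ^ (k + 2) * y by ring, gC_pow_mul, h n (by omega),
    show v - gI * v + gβ ^ (k + 2) * y = -(gI * v) + (v + gβ ^ (k + 1 + 1) * y) by ring,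
    sum_neg_I, gC_mul_gβ, gL_prepend h hv.neg k n (by omega), add_zero]

lemma gC_second_I (h : gL y (n + 1)) (hv : gU v) (k : ℕ) :
    gC (gI * v * gβ + (v + gβ ^ (k + 3) * y)) (n + 1) = 0 := by
  rw [gC_carry_second h hv.I_mul hv,
    show gI * v - gI * v + gβ ^ (k + 2) * y = gβ ^ (k + 2) * y by ring, gC_pow_mul,
    h n (by omega),
    show gI * v - v + gβ ^ (k + 2) * y = -(gI * -v) + (-v + gβ ^ (k + 1 + 1) * y) by ring,
    sum_neg_I, gC_mul_gβ, neg_neg, gL_prepend h hv k n (by omega), add_zero]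

lemma gC_second_neg (h : gL y (n + 1)) (hv : gU v) (k : ℕ) :
    gC (-v * gβ + (v + gβ ^ (k + 3) * y)) (n + 1) = gC (-(gI * v) + gβ ^ k * y) n := by
  rw [gC_carry_second h hv.neg hv,
    show -v - v + gβ ^ (k + 2) * y = -v + (-v + gβ ^ (k + 2) * y) by ring,
    show -v - gI * v + gβ ^ (k + 2) * y = gI * -v + (-v + gβ ^ (k + 1 + 1) * y) by ring,
    sum_I, sum_double, gC_mul_gβ, gC_pow_mul, gL_prepend h hv.neg.I_mul.neg k n (by omega),
    add_zero, mul_neg]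

lemma gC_second_neg_I (h : gL y (n + 1)) (hv : gU v) (k : ℕ) :
    gC (-(gI * v) * gβ + (v + gβ ^ (k + 3) * y)) (n + 1) = gC (v + gβ ^ k * y) n := by
  have e : gI * -(gI * v) = v := by linear_combination (-v) * gI_mul
  rw [gC_carry_second h hv.I_mul.neg hv,
    show -(gI * v) - v + gβ ^ (k + 2) * y = -(gI * v) + (-v + gβ ^ (k + 1 + 1) * y) by ring,
    show -(gI * v) - gI * v + gβ ^ (k + 2) * y =
      -(gI * v) + (-(gI * v) + gβ ^ (k + 2) * y) by ring,
    sum_double, gC_pow_mul, e,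
    show -(gI * v) + (-v + gβ ^ (k + 1 + 1) * y) = gI * -v + (-v + gβ ^ (k + 1 + 1) * y) by ring,
    sum_I, gC_mul_gβ, gL_prepend h hv.neg.I_mul.neg k n (by omega), zero_add]

/-- Prepending a digit at distance 3. -/
lemma gFits_three (h : gL y (n + 1)) (hv : gU v) {s : gSt} (ha : gC y (n + 1) = s.a)
    (hc : gC (v + y) n = s.c) (hd : gC (-(gI * v) + y) n = s.d)
    (hb : gC (-(gI * v) + y) n + gC (v + y) n + gC (-v * gβ + y) n = s.b) :
    gFits (n + 1) v (v + gβ ^ 3 * y) s := by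
  have e : gI * (gI * v) = -v := by linear_combination v * gI_mul
  have e' : gI * -(gI * v) = v := by linear_combination (-v) * gI_mul
  refine ⟨hv, gL_naf h hv 0, ⟨y, rfl⟩, ?_, ?_, ?_, ?_, ?_, gC_second_pos h hv 0,
    gC_second_I h hv 0, ?_⟩
  · rw [neg_add_cancel_left, gC_pow_mul, ha]
  · rw [sum_double v y 1, gC_pow_mul, pow_one, gC_carry_one h hv.I_mul, e, neg_neg, hb]
  · rw [sum_I v y 2, gC_mul_gβ, gC_carry_two h hv.I_mul.neg, e', hc]
  · rw [sum_neg_I v y 2, gC_mul_gβ, gC_carry_two h hv.neg, mul_neg, hd]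
  · rw [gC_second_neg h hv 0, pow_zero, one_mul, hd]
  · rw [gC_second_neg_I h hv 0, pow_zero, one_mul, hc]

/-- Prepending a digit at distance 4. -/
lemma gFits_four (h : gL y (n + 1)) (hv : gU v) {a b : ℕ} (ha : gC y (n + 1) = a)
    (hb : gC (-v + y) n = b) :
    gFits (n + 1) v (v + gβ ^ 4 * y) ⟨a, b, 0, 0⟩ := by
  have e : gI * (gI * v) = -v := by linear_combination v * gI_mul
  refine ⟨hv, gL_naf h hv 1, ⟨gβ * y, by ring⟩, ?_, ?_, ?_, ?_, ?_, gC_second_pos h hv 1,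
    gC_second_I h hv 1, ?_⟩
  · rw [neg_add_cancel_left, gC_pow_mul, ha]
  · rw [sum_double v y 2, gC_pow_mul, gC_carry_two h hv.I_mul, e, hb]
  · rw [sum_I v y 3, gC_mul_gβ, gC_carry_far h hv.I_mul.neg 0]; rfl
  · rw [sum_neg_I v y 3, gC_mul_gβ, gC_carry_far h hv.neg 0]; rfl
  · rw [gC_second_neg h hv 1, gL_prepend h hv.I_mul.neg 0 n (by omega)]; rfl
  · rw [gC_second_neg_I h hv 1, gL_prepend h hv 0 n (by omega)]; rfl

/-- Prepending a digit at distance at least 5. -/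
lemma gFits_far (h : gL y (n + 1)) (hv : gU v) {a : ℕ} (ha : gC y (n + 1) = a) (k : ℕ) :
    gFits (n + 1) v (v + gβ ^ (k + 5) * y) ⟨a, 0, 0, 0⟩ := by
  refine ⟨hv, gL_naf h hv (k + 2), ⟨gβ ^ (k + 2) * y, by ring⟩, ?_, ?_, ?_, ?_, ?_,
    gC_second_pos h hv (k + 2), gC_second_I h hv (k + 2), ?_⟩
  · rw [neg_add_cancel_left, gC_pow_mul, ha]
  · rw [sum_double v y (k + 3), gC_pow_mul, gC_carry_far h hv.I_mul k]; rfl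
  · rw [sum_I v y (k + 4), gC_mul_gβ, gC_carry_far h hv.I_mul.neg (k + 1)]; rfl
  · rw [sum_neg_I v y (k + 4), gC_mul_gβ, gC_carry_far h hv.neg (k + 1)]; rfl
  · rw [gC_second_neg h hv (k + 2), gL_prepend h hv.I_mul.neg (k + 1) n (by omega)]; rfl
  · rw [gC_second_neg_I h hv (k + 2), gL_prepend h hv (k + 1) n (by omega)]; rfl

end step

/-- The gaps `k` between consecutive nonzero digits described by the first argument of
`gSt.step`. -/
def gGap : Fin 3 → ℕ → Prop
  | 0, k => k = 3
  | 1, k => k = 4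
  | 2, k => 5 ≤ k

lemma gFits.step {n : ℕ} {u x : GaussianInt} {s : gSt} (h : gFits n u x s) (g : Fin 3)
    (j : Fin 4) {k : ℕ} (hk : gGap g k) :
    gFits (n + 1) (gI ^ (j : ℕ) * u) (gI ^ (j : ℕ) * u + gβ ^ k * x) (s.step g j) := by
  have hv := h.hu.I_pow_mul j
  have p2 : gI ^ 2 * u = -u := by linear_combination u * gI_mul
  have p3 : gI ^ 3 * u = -(gI * u) := by linear_combination (gI * u) * gI_mul
  have q2 : gI * (gI * u) = -u := by linear_combination u * gI_mul
  have hF := h.total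
  obtain ⟨hu, low, -, ha, hb, hc, hd, ha', hb', hc', hd'⟩ := h
  rw [neg_mul] at ha' hd'
  fin_cases g
  · obtain rfl : k = 3 := hk
    refine gFits_three low hv ?_ ?_ ?_ ?_ <;> fin_cases j <;>
      simp [gSt.step, p2, p3, q2, hF, ha, hb, hc, hd, ha', hb', hc', hd'] <;> ring
  · obtain rfl : k = 4 := hk
    have : s.step 1 j = ⟨s.F, (s.step 1 j).b, 0, 0⟩ := by fin_cases j <;> rfl
    simp only [Fin.mk_one]
    rw [this]
    refine gFits_four low hv hF ?_
    fin_cases j <;> simp [gSt.step, p2, p3, ha, hb, hc, hd]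
  · obtain ⟨k, rfl⟩ := Nat.exists_eq_add_of_le' (show 5 ≤ k from hk)
    exact gFits_far low hv hF k

/-! ### Numbers with a 3-NAF of given weight -/

/-- `gNaf n u x s`: the odd number `x` has a 3-NAF with last digit `u` and `n + 1` nonzero digits,
and `s` is the result of running `gSt.step` along this 3-NAF. -/
inductive gNaf : ℕ → GaussianInt → GaussianInt → gSt → Prop
  | base {u : GaussianInt} (hu : gU u) : gNaf 0 u u ⟨1, 0, 0, 0⟩
  | step {n : ℕ} {u x : GaussianInt} {s : gSt} (h : gNaf n u x s) (g : Fin 3) (j : Fin 4)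
      {k : ℕ} (hk : gGap g k) :
      gNaf (n + 1) (gI ^ (j : ℕ) * u) (gI ^ (j : ℕ) * u + gβ ^ k * x) (s.step g j)

lemma gNaf.fits {n : ℕ} {u x : GaussianInt} {s : gSt} (h : gNaf n u x s) : gFits n u x s := by
  induction h with
  | base hu => exact gFits_base hu
  | step _ g j hk ih => exact ih.step g j hk

lemma gNaf.not_dvd {n : ℕ} {u x : GaussianInt} {s : gSt} (h : gNaf n u x s) : ¬ gβ ∣ x := by
  obtain ⟨z, hz⟩ := h.fits.res
  rw [hz, pow_succ', mul_assoc]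
  exact h.fits.hu.not_dvd _

lemma gNAF_nil (W : ℕ) : gNAF W [] := by
  intro j k _ _ _; simp

lemma gNAF_tail {d : GaussianInt} {l : List GaussianInt} (h : gNAF 3 (d :: l)) : gNAF 3 l := by
  intro j k hjk hk hj
  simpa using h (j + 1) (k + 1) (by omega) (by omega) (by simpa using hj)

lemma gNAF_cons_zero {l : List GaussianInt} (h : gNAF 3 l) : gNAF 3 (0 :: l) := by
  intro j k hjk hk hj
  obtain ⟨k, rfl⟩ : ∃ k', k = k' + 1 := ⟨k - 1, by omega⟩
  cases j with
  | zero => simp at hj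
  | succ j =>
    simpa using h j k (by omega) (by omega) (by simpa using hj)

lemma gNAF_cons {d : GaussianInt} {l : List GaussianInt} (h : gNAF 3 l) :
    gNAF 3 (d :: 0 :: 0 :: l) := by
  intro j k hjk hk hj
  cases j with
  | zero =>
    obtain rfl | rfl : k = 1 ∨ k = 2 := by omega
    · rfl
    · rfl
  | succ j =>
    obtain ⟨k, rfl⟩ : ∃ k', k = k' + 1 := ⟨k - 1, by omega⟩
    simpa using gNAF_cons_zero (gNAF_cons_zero h) j k (by omega) (by omega) (by simpa using hj)

/-- Appending zeros at the bottom keeps the 3-NAF property. -/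
lemma exists_naf_shift {x : GaussianInt} {l : List GaussianInt} (hl : gIsRep x l) (hn : gNAF 3 l)
    (k : ℕ) : ∃ l', gIsRep (gβ ^ k * x) l' ∧ gNAF 3 l' ∧ gweight l' = gweight l := by
  induction k with
  | zero => exact ⟨l, by simpa using hl, hn, rfl⟩
  | succ k ih =>
    obtain ⟨l', h1, h2, h3⟩ := ih
    refine ⟨0 :: l', ⟨?_, ?_⟩, gNAF_cons_zero h2, by rw [gweight_cons_zero, h3]⟩
    · simpa [gD] using h1.1
    · rw [gval_cons, h1.2]; ring

lemma gNaf.exists_list {n : ℕ} {u x : GaussianInt} {s : gSt} (h : gNaf n u x s) :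
    ∃ l, gIsRep x l ∧ gNAF 3 l ∧ gweight l = n + 1 := by
  induction h with
  | @base u hu =>
    refine ⟨[u], ⟨by simpa using hu.mem, by simp [gval]⟩, ?_, ?_⟩
    · intro j k hjk _ _
      obtain ⟨k, rfl⟩ : ∃ k', k = k' + 1 := ⟨k - 1, by omega⟩
      simp
    · rw [gweight_cons hu.ne_zero]; rfl
  | @step n u x s h g j k hk ih =>
    obtain ⟨l, h1, h2, h3⟩ := ih
    have hv := h.fits.hu.I_pow_mul j
    have hk3 : 3 ≤ k := by
      fin_cases g <;> simp [gGap] at hk <;> omega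
    obtain ⟨k, rfl⟩ := Nat.exists_eq_add_of_le' hk3
    obtain ⟨l', h1', h2', h3'⟩ := exists_naf_shift h1 h2 k
    refine ⟨_ :: 0 :: 0 :: l', ⟨?_, ?_⟩, gNAF_cons (d := gI ^ (j : ℕ) * u) h2', ?_⟩
    · intro d hd
      simp only [List.mem_cons] at hd
      rcases hd with rfl | rfl | rfl | hd
      · exact hv.mem
      · simp [gD]
      · simp [gD]
      · exact h1'.1 d hd
    · rw [gval_cons, gval_cons, gval_cons, h1'.2]; ring
    · rw [gweight_cons hv.ne_zero, gweight_cons_zero, gweight_cons_zero, h3', h3]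

/-- Every unit is `i ^ j * u`. -/
lemma gU.exists_pow {u v : GaussianInt} (hu : gU u) (hv : gU v) :
    ∃ j : Fin 4, v = gI ^ (j : ℕ) * u := by
  have p2 : gI ^ 2 * u = -u := by linear_combination u * gI_mul
  have p3 : gI ^ 3 * u = -(gI * u) := by linear_combination (gI * u) * gI_mul
  rcases hu.cases hv with h | h | h | h
  · exact ⟨0, by simp [h]⟩
  · exact ⟨2, by simp [h, p2]⟩
  · exact ⟨1, by simp [h]⟩
  · exact ⟨3, by simp [h, p3]⟩

lemma gNaf_of_list (l : List GaussianInt) (hl : ∀ d ∈ l, d ∈ gD) (hn : gNAF 3 l) (n : ℕ)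
    (hw : gweight l = n + 1) :
    ∃ k y u s, gval l = gβ ^ k * y ∧ l.getD k 0 ≠ 0 ∧ gNaf n u y s := by
  induction l generalizing n with
  | nil => simp [gweight] at hw
  | cons d l ih =>
    have hl' : ∀ d ∈ l, d ∈ gD := fun a ha => hl a (by simp [ha])
    by_cases hd : d = 0
    · subst hd
      rw [gweight_cons_zero] at hw
      obtain ⟨k, y, u, s, h1, h2, h3⟩ := ih hl' (gNAF_tail hn) n hw
      refine ⟨k + 1, y, u, s, ?_, by simpa using h2, h3⟩
      rw [gval_cons, h1]; ring
    · have hU := gU_of_mem (hl d (by simp)) hd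
      rw [gweight_cons hd] at hw
      cases n with
      | zero =>
        have h0 := gval_of_weight_zero l (by omega)
        exact ⟨0, d, d, _, by simp [gval_cons, h0], by simpa using hd, .base hU⟩
      | succ n =>
        obtain ⟨k, y, u, s, h1, h2, h3⟩ := ih hl' (gNAF_tail hn) n (by omega)
        have z0 := hn 0 1 (by omega) (by omega) (by simpa using hd)
        have z1 := hn 0 2 (by omega) (by omega) (by simpa using hd)
        have hk : 2 ≤ k := by
          by_contra hlt
          obtain rfl | rfl : k = 0 ∨ k = 1 := by omega
          · exact h2 (by simpa using z0)
          · exact h2 (by simpa using z1)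
        obtain ⟨g, hg⟩ : ∃ g, gGap g (k + 1) := by
          obtain h | h | h : k + 1 = 3 ∨ k + 1 = 4 ∨ 5 ≤ k + 1 := by omega
          · exact ⟨0, h⟩
          · exact ⟨1, h⟩
          · exact ⟨2, h⟩
        obtain ⟨j, rfl⟩ := h3.fits.hu.exists_pow hU
        refine ⟨0, _, _, _, ?_, by simpa using hd, h3.step g j hg⟩
        rw [gval_cons, h1]; ring

lemma exists_gNaf_iff (x : GaussianInt) (n : ℕ) :
    (¬ gβ ∣ x ∧ ∃ l : List GaussianInt, gIsRep x l ∧ gNAF 3 l ∧ gweight l = n + 1) ↔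
      ∃ u s, gNaf n u x s := by
  constructor
  · rintro ⟨hx, l, ⟨h1, rfl⟩, h2, h3⟩
    obtain ⟨k, y, u, s, hv, -, h⟩ := gNaf_of_list l h1 h2 n h3
    have hk : k = 0 := by
      by_contra hk
      exact hx (hv ▸ (dvd_pow_self _ hk).mul_right y)
    subst hk
    exact ⟨u, s, by simpa [hv] using h⟩
  · rintro ⟨u, s, h⟩
    exact ⟨h.not_dvd, h.exists_list⟩

lemma gNaf.numOpt {n : ℕ} {u x : GaussianInt} {s : gSt} (h : gNaf n u x s) :
    gnumOpt x = s.F := by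
  have hset : {l | gOptimal x l} = gS x (n + 1) := by
    have hlow : ∀ l, gIsRep x l → n + 1 ≤ gweight l := by
      intro l hl
      by_contra hlt
      obtain ⟨l', h1, h2, h3⟩ := exists_normalized l hl.1
      rw [hl.2] at h1
      have := h.fits.low (gweight l) (by omega)
      rw [gC, Set.encard_eq_zero] at this
      exact this.subset (show l' ∈ gS x (gweight l) from ⟨h1, h2, h3⟩)
    obtain ⟨l₀, hl₀, -, hw₀⟩ := h.exists_list
    ext l
    simp only [Set.mem_ofPred_eq, gS, gOptimal]
    constructor
    · rintro ⟨h1, h2, h3⟩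
      exact ⟨h1, h2, le_antisymm (hw₀ ▸ h3 l₀ hl₀) (hlow l h1)⟩
    · rintro ⟨h1, h2, h3⟩
      exact ⟨h1, h2, fun l' hl' => h3 ▸ hlow l' hl'⟩
  have h1 : gnumOpt x = {l | gOptimal x l}.ncard := rfl
  rw [h1, hset, Set.ncard_def, show (gS x (n + 1)).encard = _ from h.fits.total]
  rfl

/-! ### Maximizing the number of optimal representations -/

lemma rseq_rec (m : ℕ) :
    rseq (m + 5) = rseq (m + 4) + 2 * rseq (m + 3) + 2 * rseq (m + 2) := rfl

/-- The linear recurrence fails for `r_4 = 17`, but holds there as an inequality. -/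
lemma rseq_ge (m : ℕ) :
    rseq (m + 3) + 2 * rseq (m + 2) + 2 * rseq (m + 1) ≤ rseq (m + 4) := by
  cases m with
  | zero => decide
  | succ m => exact (rseq_rec m).ge

lemma rseq_bounds (m : ℕ) : 0 < rseq m ∧ rseq m ≤ rseq (m + 1) ∧ rseq (m + 1) ≤ 3 * rseq m := by
  induction m using Nat.strong_induction_on with
  | _ m ih =>
    match m with
    | 0 => decide
    | 1 => decide
    | 2 => decide
    | 3 => decide
    | m + 4 =>
      have h2 := ih (m + 2) (by omega)
      have h3 := ih (m + 3) (by omega)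
      have h := rseq_rec m
      have h4 := rseq_ge m
      simp only [Nat.add_assoc, Nat.reduceAdd] at h2 h3 h ⊢
      omega

/-- Bounds on the digit-resolved counts of a number with 3-NAF weight `w + 4`, stated with
`r4 = r_{w+4}`, …, `r2 = r_{w+2}`. The mixed bounds control prepending a digit other than the two
which give the maximum; the last clause describes the maximizers. -/
def gInv (r4 r3 r2 : ℕ) (s : gSt) : Prop :=
  s.F ≤ r4 ∧ s.a ≤ r3 ∧ s.b ≤ r3 ∧ s.c ≤ r2 ∧ s.d ≤ r2 ∧
  2 * s.b + 3 * s.d < 2 * r3 + 2 * r2 ∧ 2 * s.b + 3 * s.c < 2 * r3 + 2 * r2 ∧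
  5 * s.b + 4 * s.c < 2 * r4 + 2 * r3 ∧ 5 * s.b + 4 * s.d < 2 * r4 + 2 * r3 ∧
  (s.F = r4 → s.a = r3 ∧ ((s.c = r2 ∧ s.d < r2) ∨ (s.d = r2 ∧ s.c < r2)))

instance (r4 r3 r2 : ℕ) (s : gSt) : Decidable (gInv r4 r3 r2 s) := by
  unfold gInv; infer_instance

lemma gInv.step {m : ℕ} {s : gSt} (h : gInv (rseq (m + 4)) (rseq (m + 3)) (rseq (m + 2)) s)
    (g : Fin 3) (j : Fin 4) :
    gInv (rseq (m + 5)) (rseq (m + 4)) (rseq (m + 3)) (s.step g j) ∧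
      ((s.step g j).F = rseq (m + 5) ↔ g = 0 ∧ s.F = rseq (m + 4) ∧
        ((j = 2 ∧ s.c = rseq (m + 2)) ∨ (j = 3 ∧ s.d = rseq (m + 2)))) := by
  have h5 := rseq_rec m
  have h4 := rseq_ge m
  have b1 := rseq_bounds (m + 1)
  have b2 := rseq_bounds (m + 2)
  have b3 := rseq_bounds (m + 3)
  simp only [Nat.add_assoc, Nat.reduceAdd] at b1 b2 b3
  generalize rseq (m + 5) = r5 at *
  generalize rseq (m + 4) = r4 at *
  generalize rseq (m + 3) = r3 at *
  generalize rseq (m + 2) = r2 at *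
  generalize rseq (m + 1) = r1 at *
  obtain ⟨a, b, c, d⟩ := s
  simp only [gInv, gSt.F] at h
  fin_cases g <;> fin_cases j <;> simp [gInv, gSt.step, gSt.F] <;> omega

/-- The maximal step sequences at weight 4, from the leading digit downwards, together with the
bounds at weight 4. -/
lemma base_words : ∀ (g₁ : Fin 3) (j₁ : Fin 4) (g₂ : Fin 3) (j₂ : Fin 4) (g₃ : Fin 3) (j₃ : Fin 4),
    gInv 17 8 3 ((((⟨1, 0, 0, 0⟩ : gSt).step g₁ j₁).step g₂ j₂).step g₃ j₃) ∧
    (((((⟨1, 0, 0, 0⟩ : gSt).step g₁ j₁).step g₂ j₂).step g₃ j₃).F = 17 ↔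
      (g₁ = 0 ∧ g₂ = 0 ∧ g₃ = 0) ∧ ((j₁ = 3 ∧ j₂ = 0) ∨ (j₁ = 2 ∧ j₂ = 1)) ∧
        (j₃ = 0 ∨ j₃ = 1)) := by
  decide +kernel

lemma gNaf.succ_inv {n : ℕ} {v x : GaussianInt} {s : gSt} (h : gNaf (n + 1) v x s) :
    ∃ u y s' g j k, gNaf n u y s' ∧ gGap g k ∧ v = gI ^ (j : Fin 4).val * u ∧
      x = v + gβ ^ k * y ∧ s = s'.step g j := by
  cases h with
  | step h g j hk => exact ⟨_, _, _, g, j, _, h, hk, rfl, rfl, rfl⟩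

lemma gNaf.zero_inv {v x : GaussianInt} {s : gSt} (h : gNaf 0 v x s) :
    gU v ∧ x = v ∧ s = ⟨1, 0, 0, 0⟩ := by
  cases h with
  | base hu => exact ⟨hu, rfl, rfl⟩

lemma gNaf.inv {m : ℕ} {u x : GaussianInt} {s : gSt} (h : gNaf (m + 3) u x s) :
    gInv (rseq (m + 4)) (rseq (m + 3)) (rseq (m + 2)) s := by
  induction m generalizing u x s with
  | zero =>
    obtain ⟨_, _, _, g₃, j₃, _, h2, -, -, -, rfl⟩ := gNaf.succ_inv (n := 2) h
    obtain ⟨_, _, _, g₂, j₂, _, h1, -, -, -, rfl⟩ := h2.succ_inv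
    obtain ⟨_, _, _, g₁, j₁, _, h0, -, -, -, rfl⟩ := h1.succ_inv
    obtain ⟨-, -, rfl⟩ := h0.zero_inv
    exact (base_words g₁ j₁ g₂ j₂ g₃ j₃).1
  | succ m ih =>
    obtain ⟨_, _, s', g, j, _, h', -, -, -, rfl⟩ := gNaf.succ_inv (n := m + 3) h
    exact ((ih h').step g j).1

/-- The odd numbers of 3-NAF weight `m + 4` with the maximal number of optimal representations. -/
def gX (m : ℕ) : Set GaussianInt :=
  {x | ∃ u s, gNaf (m + 3) u x s ∧ s.F = rseq (m + 4)}

lemma gNaf.unique {n n' : ℕ} {u u' x : GaussianInt} {s s' : gSt} (h : gNaf n u x s)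
    (h' : gNaf n' u' x s') : u = u' := by
  obtain ⟨z, hz⟩ := h.fits.res
  obtain ⟨z', hz'⟩ := h'.fits.res
  exact h.fits.hu.eq_of_congr h'.fits.hu (hz.symm.trans hz')

/-- Each maximizer of weight `m + 4` extends in exactly one way to a maximizer of weight `m + 5`. -/
lemma gX_succ (m : ℕ) : (gX (m + 1)).ncard = (gX m).ncard := by
  have hex : ∀ y ∈ gX m, ∃ v, gU v ∧ v + gβ ^ 3 * y ∈ gX (m + 1) := by
    rintro y ⟨u, s, h, hF⟩
    have hinv := h.inv
    obtain ⟨-, hcd⟩ := hinv.2.2.2.2.2.2.2.2.2 hF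
    rcases hcd with ⟨hc, -⟩ | ⟨hd, -⟩
    · have hs := h.step 0 2 (k := 3) rfl
      exact ⟨_, hs.fits.hu, _, _, hs, (hinv.step 0 2).2.2 ⟨rfl, hF, Or.inl ⟨rfl, hc⟩⟩⟩
    · have hs := h.step 0 3 (k := 3) rfl
      exact ⟨_, hs.fits.hu, _, _, hs, (hinv.step 0 3).2.2 ⟨rfl, hF, Or.inr ⟨rfl, hd⟩⟩⟩
  choose! f hfU hf using hex
  have huniq : ∀ y v v', gU v → gU v' → v + gβ ^ 3 * y ∈ gX (m + 1) →
      v' + gβ ^ 3 * y ∈ gX (m + 1) → v = v' ∧ y ∈ gX m := by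
    have aux : ∀ y v, gU v → v + gβ ^ 3 * y ∈ gX (m + 1) → ∃ u s, gNaf (m + 3) u y s ∧
        s.F = rseq (m + 4) ∧ ((v = gI ^ 2 * u ∧ s.c = rseq (m + 2)) ∨
          (v = gI ^ 3 * u ∧ s.d = rseq (m + 2))) := by
      rintro y v hv ⟨v₁, s, h, hF⟩
      obtain ⟨z, hz⟩ := h.fits.res
      obtain rfl := hv.eq_of_congr h.fits.hu hz
      obtain ⟨u, y', s', g, j, k, h', hk, hv', hx, rfl⟩ := gNaf.succ_inv (n := m + 3) h
      obtain ⟨rfl, hF', hj⟩ := (h'.inv.step g j).2.1 hF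
      obtain rfl : k = 3 := hk
      have hy : y = y' := by
        have := add_left_cancel hx
        exact mul_left_cancel₀ (pow_ne_zero 3 gβ_ne) this
      subst hy
      refine ⟨u, s', h', hF', ?_⟩
      rcases hj with ⟨rfl, hc⟩ | ⟨rfl, hd⟩
      · exact Or.inl ⟨hv', hc⟩
      · exact Or.inr ⟨hv', hd⟩
    intro y v v' hv hv' h h'
    obtain ⟨u, s, hn, hF, hor⟩ := aux y v hv h
    obtain ⟨u', s', hn', hF', hor'⟩ := aux y v' hv' h'
    refine ⟨?_, u, s, hn, hF⟩
    obtain rfl := hn.unique hn'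
    -- both vectors record the same counts of representations of `y`
    have ec : s.c = s'.c := by exact_mod_cast hn.fits.hc.symm.trans hn'.fits.hc
    have ed : s.d = s'.d := by exact_mod_cast hn.fits.hd.symm.trans hn'.fits.hd
    obtain ⟨-, hcd⟩ := hn.inv.2.2.2.2.2.2.2.2.2 hF
    rcases hor with ⟨rfl, hc⟩ | ⟨rfl, hd⟩ <;> rcases hor' with ⟨rfl, hc'⟩ | ⟨rfl, hd'⟩
    · rfl
    · omega
    · omega
    · rfl
  have himg : gX (m + 1) = (fun y => f y + gβ ^ 3 * y) '' gX m := by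
    ext x
    constructor
    · intro hx
      obtain ⟨v, s, h, hF⟩ := id hx
      obtain ⟨z, rfl⟩ := h.fits.res
      have hz := (huniq z v v h.fits.hu h.fits.hu hx hx).2
      refine ⟨z, hz, ?_⟩
      simp only
      rw [(huniq z v (f z) h.fits.hu (hfU z hz) hx (hf z hz)).1]
    · rintro ⟨y, hy, rfl⟩
      exact hf y hy
  rw [himg]
  refine Set.InjOn.ncard_image ?_
  intro y hy y' hy' hyy
  simp only at hyy
  have hff := (hfU y hy).eq_of_congr (hfU y' hy') hyy
  rw [hff] at hyy
  exact mul_left_cancel₀ (pow_ne_zero 3 gβ_ne) (add_left_cancel hyy)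

/-- The number with the four nonzero 3-NAF digits `u`, `i ^ j₁ * u`, … at mutual distance 3. -/
def gWord (u : GaussianInt) (j₁ j₂ j₃ : Fin 4) : GaussianInt :=
  gI ^ j₃.val * (gI ^ j₂.val * (gI ^ j₁.val * u)) + gβ ^ 3 *
    (gI ^ j₂.val * (gI ^ j₁.val * u) + gβ ^ 3 * (gI ^ j₁.val * u + gβ ^ 3 * u))

/-- The maximizers of weight 4. -/
def gX4 : Finset GaussianInt :=
  (({1, -1, gI, -gI} : Finset GaussianInt) ×ˢ ({(3, 0), (2, 1)} : Finset (Fin 4 × Fin 4)) ×ˢ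
    ({0, 1} : Finset (Fin 4))).image (fun p => gWord p.1 p.2.1.1 p.2.1.2 p.2.2)

lemma mem_gX4_iff (x : GaussianInt) : x ∈ gX4 ↔ ∃ u j₁ j₂ j₃, gU u ∧
    ((j₁ = 3 ∧ j₂ = 0) ∨ (j₁ = 2 ∧ j₂ = 1)) ∧ (j₃ = 0 ∨ j₃ = 1) ∧ x = gWord u j₁ j₂ j₃ := by
  simp only [gX4, Finset.mem_image, Finset.mem_product, Finset.mem_insert, Finset.mem_singleton,
    Prod.exists, Prod.mk.injEq, gU, and_assoc, eq_comm (a := x)]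

lemma gX_zero : gX 0 = (gX4 : Set GaussianInt) := by
  ext x
  rw [Finset.mem_coe, mem_gX4_iff]
  constructor
  · rintro ⟨u, s, h, hF⟩
    obtain ⟨_, _, _, g₃, j₃, _, h2, hk₃, rfl, rfl, rfl⟩ := gNaf.succ_inv (n := 2) h
    obtain ⟨_, _, _, g₂, j₂, _, h1, hk₂, rfl, rfl, rfl⟩ := h2.succ_inv
    obtain ⟨_, _, _, g₁, j₁, _, h0, hk₁, rfl, rfl, rfl⟩ := h1.succ_inv
    obtain ⟨hu, rfl, rfl⟩ := h0.zero_inv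
    obtain ⟨⟨rfl, rfl, rfl⟩, hj⟩ := (base_words g₁ j₁ g₂ j₂ g₃ j₃).2.1 hF
    obtain rfl : _ = 3 := hk₁
    obtain rfl : _ = 3 := hk₂
    obtain rfl : _ = 3 := hk₃
    exact ⟨_, j₁, j₂, j₃, hu, hj.1, hj.2, rfl⟩
  · rintro ⟨u, j₁, j₂, j₃, hu, hj, hj', rfl⟩
    have h := (((gNaf.base hu).step 0 j₁ (k := 3) rfl).step 0 j₂ (k := 3) rfl).step 0 j₃
      (k := 3) rfl
    exact ⟨_, _, h, (base_words 0 j₁ 0 j₂ 0 j₃).2.2 ⟨⟨rfl, rfl, rfl⟩, hj, hj'⟩⟩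

lemma gX_ncard (m : ℕ) : (gX m).ncard = 16 := by
  induction m with
  | zero =>
    rw [gX_zero, Set.ncard_coe_finset]
    decide +kernel
  | succ m ih => rw [gX_succ, ih]

/-- For `N ≥ 4` there are exactly 16 Gaussian integers `x` not divisible by
`β` whose 3-NAF representation has exactly `N` nonzero digits and which
attain `r_N` optimal representations. -/
theorem stmt9 (N : ℕ) (hN : 4 ≤ N) :
    {x : GaussianInt | ¬ gβ ∣ x ∧
      (∃ l : List GaussianInt, gIsRep x l ∧ gNAF 3 l ∧ gweight l = N) ∧
      gnumOpt x = rseq N}.ncard = 16 := by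
  obtain ⟨m, rfl⟩ := Nat.exists_eq_add_of_le' hN
  rw [← gX_ncard m]
  congr 1
  ext x
  simp only [Set.mem_ofPred_eq, gX]
  rw [← and_assoc, exists_gNaf_iff x (m + 3)]
  constructor
  · rintro ⟨⟨u, s, h⟩, hF⟩
    exact ⟨u, s, h, h.numOpt ▸ hF⟩
  · rintro ⟨u, s, h, hF⟩
    exact ⟨⟨u, s, h⟩, h.numOpt.trans hF⟩
end
end

section
/- Define row vectors t_m ∈ ℤ^{1×9} by t_4 = e A_1 A_{−1} A_{−i} A_{−i} R³ and t_{m+1} = t_m A_1 R² for m ≥ 4. Then for every m ≥ 5, t_m = (r_m, r_{m−2} + r_{m−3}, r_{m−2}, r_{m−1}, r_{m−3}, r_{m−2}, 0, 0, r_{m−3}), where (r_N) is defined by r_0 = r_1 = 1, r_2 = 3, r_3 = 8, r_4 = 17 and r_{N+3} = r_{N+2} + 2 r_{N+1} + 2 r_N for N ≥ 2. -/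
/-!
The claim is an induction on `m` starting from `t_5`. Right multiplication by `A_1 R²` only sees the
coordinates `x₀, x₂, x₃, x₆` of a row vector `x`, sending it to
`(x₀ + 2x₂ + 2x₃ + x₆, x₂ + x₃ + x₆, x₃, x₀, x₂, x₃, 0, 0, x₂)`. For `x = t_m` these coordinates are
`r_m, r_{m-2}, r_{m-1}, 0`, so the first entry of `t_{m+1}` is `r_m + 2 r_{m-1} + 2 r_{m-2} = r_{m+1}`
by the recurrence, and the other entries are those claimed. The start `t_5` is the image under the
same map of `t_4 = (17, 5, 3, 8, 1, 3, 0, 0, 1)`.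
-/

open Matrix

noncomputable section

/-- The row vector `e = (1,0,0,0,0,0,0,0,0)`. -/
def e9 : Matrix (Fin 1) (Fin 9) ℤ := !![1,0,0,0,0,0,0,0,0]

/-- The permutation matrix `R = diag(1, P1, P1)`. -/
def R9 : Matrix (Fin 9) (Fin 9) ℤ :=
  !![1,0,0,0,0,0,0,0,0;
     0,0,1,0,0,0,0,0,0;
     0,0,0,1,0,0,0,0,0;
     0,0,0,0,1,0,0,0,0;
     0,1,0,0,0,0,0,0,0;
     0,0,0,0,0,0,1,0,0;
     0,0,0,0,0,0,0,1,0;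
     0,0,0,0,0,0,0,0,1;
     0,0,0,0,0,1,0,0,0]

/-- The matrix `A_1`. -/
def A1 : Matrix (Fin 9) (Fin 9) ℤ :=
  !![1,1,0,0,0,0,0,0,0;
     0,0,0,0,0,0,0,0,0;
     2,0,1,1,0,0,1,0,0;
     2,0,0,1,1,0,0,1,0;
     0,0,0,0,0,0,0,0,0;
     0,0,0,0,0,0,0,0,0;
     1,0,0,1,0,0,0,0,0;
     0,0,0,0,0,0,0,0,0;
     0,0,0,0,0,0,0,0,0]

/-- The matrix `A_0`. -/
def A0 : Matrix (Fin 9) (Fin 9) ℤ :=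
  !![1,0,0,0,0,0,0,0,0;
     0,0,0,0,0,0,1,0,0;
     0,0,0,0,0,0,0,1,0;
     0,0,0,0,0,0,0,0,1;
     0,0,0,0,0,1,0,0,0;
     0,0,0,0,0,0,0,0,0;
     0,0,0,0,0,0,0,0,0;
     0,0,0,0,0,0,0,0,0;
     0,0,0,0,0,0,0,0,0]

/-- The matrix `A_i = Rᵀ A_1 R`. -/
def Ai : Matrix (Fin 9) (Fin 9) ℤ := R9ᵀ * A1 * R9

/-- The matrix `A_{-1} = Rᵀ A_i R`. -/
def Am1 : Matrix (Fin 9) (Fin 9) ℤ := R9ᵀ * Ai * R9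

/-- The matrix `A_{-i} = Rᵀ A_{-1} R`. -/
def Ami : Matrix (Fin 9) (Fin 9) ℤ := R9ᵀ * Am1 * R9

/-- The matrix `A_d` associated with a digit `d ∈ D`. -/
def Amat (d : GaussianInt) : Matrix (Fin 9) (Fin 9) ℤ :=
  if d = 0 then A0
  else if d = 1 then A1
  else if d = gI then Ai
  else if d = -1 then Am1
  else Ami

/-- The row vectors `t_m` for `m ≥ 4`: `t_4 = e A_1 A_{-1} A_{-i} A_{-i} R³`
and `t_{m+1} = t_m A_1 R²`. -/
def tvec (m : ℕ) : Matrix (Fin 1) (Fin 9) ℤ :=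
  e9 * (A1 * Am1 * Ami * Ami * R9 ^ 3) * (A1 * R9 ^ 2) ^ (m - 4)

lemma row_mul_R9 (a b c d f g h k l : ℤ) :
    !![a, b, c, d, f, g, h, k, l] * R9 = !![a, f, b, c, d, l, g, h, k] := by
  ext i j
  fin_cases i
  fin_cases j <;> simp [R9, Matrix.mul_apply, Fin.sum_univ_succ]

lemma row_mul_R9_transpose (a b c d f g h k l : ℤ) :
    !![a, b, c, d, f, g, h, k, l] * R9ᵀ = !![a, c, d, f, b, h, k, l, g] := by
  ext i j
  fin_cases i
  fin_cases j <;> simp [R9, Matrix.mul_apply, Fin.sum_univ_succ]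

lemma row_mul_A1 (a b c d f g h k l : ℤ) :
    !![a, b, c, d, f, g, h, k, l] * A1 =
      !![a + 2 * c + 2 * d + h, a, c, c + d + h, d, 0, c, d, 0] := by
  ext i j
  fin_cases i
  fin_cases j <;> simp [A1, Matrix.mul_apply, Fin.sum_univ_succ] <;> ring

lemma row_mul_A1_mul_R9_sq (a b c d f g h k l : ℤ) :
    !![a, b, c, d, f, g, h, k, l] * (A1 * R9 ^ 2) =
      !![a + 2 * c + 2 * d + h, c + d + h, d, a, c, d, 0, 0, c] := by
  rw [pow_two, ← Matrix.mul_assoc, ← Matrix.mul_assoc, row_mul_A1, row_mul_R9, row_mul_R9]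

lemma tvec_four : tvec 4 = !![17, 5, 3, 8, 1, 3, 0, 0, 1] := by
  -- Associating to the left keeps every product a row vector times a matrix.
  simp only [tvec, Ami, Am1, Ai, Nat.sub_self, pow_zero, Matrix.mul_one, pow_succ, Matrix.one_mul,
    ← Matrix.mul_assoc]
  rw [e9]
  simp only [row_mul_A1, row_mul_R9, row_mul_R9_transpose]
  norm_num

lemma tvec_succ (m : ℕ) (hm : 4 ≤ m) : tvec (m + 1) = tvec m * (A1 * R9 ^ 2) := by
  rw [tvec, tvec, Nat.sub_add_comm hm, pow_succ _ (m - 4), ← Matrix.mul_assoc]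

/-- Explicit form of the vectors `t_m` for `m ≥ 5`. -/
theorem stmt11 (m : ℕ) (hm : 5 ≤ m) :
    tvec m =
      !![(rseq m : ℤ), (rseq (m - 2) : ℤ) + (rseq (m - 3) : ℤ),
         (rseq (m - 2) : ℤ), (rseq (m - 1) : ℤ), (rseq (m - 3) : ℤ),
         (rseq (m - 2) : ℤ), 0, 0, (rseq (m - 3) : ℤ)] := by
  induction m, hm using Nat.le_induction with
  | base =>
    rw [tvec_succ 4 le_rfl, tvec_four, row_mul_A1_mul_R9_sq]
    simp [rseq]
  | succ m hm ih =>
    rw [tvec_succ m (by omega), ih, row_mul_A1_mul_R9_sq]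
    -- Writing `m = n + 5` removes the truncated subtractions from the indices.
    obtain ⟨n, rfl⟩ := Nat.exists_eq_add_of_le' hm
    have hr : rseq (n + 5 + 1) = rseq (n + 5) + 2 * rseq (n + 4) + 2 * rseq (n + 3) := by
      rw [rseq]
    simp only [hr, Nat.add_sub_cancel, show n + 5 - 1 = n + 4 from rfl,
      show n + 5 - 2 = n + 3 from rfl, show n + 5 + 1 - 2 = n + 4 from rfl,
      show n + 5 + 1 - 3 = n + 3 from rfl]
    push_cast
    congr! 3 <;> ring_nf
end
end

section
/- Let d_1, …, d_k and f_1, …, f_m be digits from D = {0, 1, −1, i, −i} such that the number of nonzero terms among d_1, …, d_k equals the number of nonzero terms among f_1, …, f_m. If the row vector e A_{d_1} A_{d_2} ⋯ A_{d_k} is strictly majorised by e A_{f_1} A_{f_2} ⋯ A_{f_m} (i.e., e A_{d_1} ⋯ A_{d_k} ≺ e A_{f_1} ⋯ A_{f_m}), then for every choice of further digits d_{k+1}, …, d_n ∈ D, writing N for the total number of nonzero terms among d_1, …, d_n, there exists a sequence h_1, …, h_p ∈ D with exactly N nonzero terms such that e A_{d_1} ⋯ A_{d_n} eᵀ < e A_{h_1}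 ⋯ A_{h_p} eᵀ. -/
/-!
Every `P ∈ 𝒫` can be pushed through a matrix `A_d` at the cost of changing the digit and the
permutation: `A_d Q = P A_{d'}` with `d'` zero exactly when `d` is. It suffices to see this for the
two generators. For `R` it is the definition of the `A_d`: `A_d R = R A_{i d}`. For `C`
the digit `d` becomes `i conj d`: one has `A_d C R = C A_{i conj d}` for `d ≠ 0`, while
`A_0 C R³ = C A_0`.

The matrices `A_d` have nonnegative entries and top left entry `1`. Hence `u P ≤ v`, with strict
inequality in the first coordinate, gives `u A_d Q = u P A_{d'} ≤ v A_{d'}`, again strict in the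
first coordinate. Thus strict majorisation survives multiplying `u` by `A_d` and `v` by `A_{d'}`, and
by induction a whole continuation can be appended. At the end, permutations in `𝒫` fix
the first coordinate, which is the value `u eᵀ`.
-/

open Matrix

noncomputable section

/-- The permutation matrix `C = diag(1, P2, P3)`. -/
def C9 : Matrix (Fin 9) (Fin 9) ℤ :=
  !![1,0,0,0,0,0,0,0,0;
     0,1,0,0,0,0,0,0,0;
     0,0,0,0,1,0,0,0,0;
     0,0,0,1,0,0,0,0,0;
     0,0,1,0,0,0,0,0,0;
     0,0,0,0,0,0,0,0,1;
     0,0,0,0,0,0,0,1,0;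
     0,0,0,0,0,0,1,0,0;
     0,0,0,0,0,1,0,0,0]

/-- The group `𝒫 = {R^k, C R^k : k = 0,1,2,3}` of permutation matrices. -/
def Pgrp : Set (Matrix (Fin 9) (Fin 9) ℤ) :=
  {M | ∃ k : Fin 4, M = R9 ^ (k : ℕ) ∨ M = C9 * R9 ^ (k : ℕ)}

/-- `u ≼ v` : `u` is majorised by `v`. -/
def gmaj (u v : Matrix (Fin 1) (Fin 9) ℤ) : Prop :=
  ∃ P ∈ Pgrp, ∀ j, (u * P) 0 j ≤ v 0 j

/-- `u ≺ v` : `u` is strictly majorised by `v`. -/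
def gsmaj (u v : Matrix (Fin 1) (Fin 9) ℤ) : Prop :=
  ∃ P ∈ Pgrp, (∀ j, (u * P) 0 j ≤ v 0 j) ∧ (u * P) 0 0 < v 0 0

/-- `u ∼ v` : `u ≼ v` and `v ≼ u`. -/
def geqv (u v : Matrix (Fin 1) (Fin 9) ℤ) : Prop := gmaj u v ∧ gmaj v u

/-- The monoid generated by `R` and `C`. It contains `𝒫`, so the commutation relations only need
to be checked on the two generators. -/
def symMon : Submonoid (Matrix (Fin 9) (Fin 9) ℤ) := Submonoid.closure {R9, C9}

lemma R9_mem_symMon : R9 ∈ symMon := Submonoid.subset_closure (by simp)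

lemma C9_mem_symMon : C9 ∈ symMon := Submonoid.subset_closure (by simp)

lemma Pgrp_subset_symMon {P : Matrix (Fin 9) (Fin 9) ℤ} (hP : P ∈ Pgrp) : P ∈ symMon := by
  obtain ⟨k, rfl | rfl⟩ := hP
  · exact pow_mem R9_mem_symMon _
  · exact mul_mem C9_mem_symMon (pow_mem R9_mem_symMon _)

lemma Ai_eq : Ai =
    !![1,0,1,0,0,0,0,0,0;
       0,0,0,0,0,0,0,0,0;
       0,0,0,0,0,0,0,0,0;
       2,0,0,1,1,0,0,1,0;
       2,1,0,0,1,0,0,0,1;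
       0,0,0,0,0,0,0,0,0;
       0,0,0,0,0,0,0,0,0;
       1,0,0,0,1,0,0,0,0;
       0,0,0,0,0,0,0,0,0] := by
  unfold Ai; decide +kernel

lemma Am1_eq : Am1 =
    !![1,0,0,1,0,0,0,0,0;
       2,1,1,0,0,1,0,0,0;
       0,0,0,0,0,0,0,0,0;
       0,0,0,0,0,0,0,0,0;
       2,1,0,0,1,0,0,0,1;
       0,0,0,0,0,0,0,0,0;
       0,0,0,0,0,0,0,0,0;
       0,0,0,0,0,0,0,0,0;
       1,1,0,0,0,0,0,0,0] := by
  unfold Am1; rw [Ai_eq]; decide +kernel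

lemma Ami_eq : Ami =
    !![1,0,0,0,1,0,0,0,0;
       2,1,1,0,0,1,0,0,0;
       2,0,1,1,0,0,1,0,0;
       0,0,0,0,0,0,0,0,0;
       0,0,0,0,0,0,0,0,0;
       1,0,1,0,0,0,0,0,0;
       0,0,0,0,0,0,0,0,0;
       0,0,0,0,0,0,0,0,0;
       0,0,0,0,0,0,0,0,0] := by
  unfold Ami; rw [Am1_eq]; decide +kernel

lemma Amat_zero : Amat 0 = A0 := by simp [Amat]

lemma Amat_one : Amat 1 = A1 := by simp [Amat]

lemma Amat_I : Amat gI = Ai := by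
  have h0 : gI ≠ 0 := by decide
  have h1 : gI ≠ 1 := by decide
  simp [Amat, h0, h1]

lemma Amat_neg_one : Amat (-1) = Am1 := by
  have h1 : (-1 : GaussianInt) ≠ 1 := by decide
  have h2 : (-1 : GaussianInt) ≠ gI := by decide
  simp [Amat, h1, h2]

lemma Amat_neg_I : Amat (-gI) = Ami := by
  have h0 : -gI ≠ 0 := by decide
  have h1 : -gI ≠ 1 := by decide
  have h2 : -gI ≠ gI := by decide
  have h3 : -gI ≠ -1 := by decide
  unfold Amat
  rw [if_neg h0, if_neg h1, if_neg h2, if_neg h3]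

lemma Amat_nonneg {d : GaussianInt} (hd : d ∈ gD) (i j : Fin 9) : 0 ≤ Amat d i j := by
  -- Equality with the matrix of absolute values is a decidable form of nonnegativity.
  have h : (Amat d).map (fun x => |x|) = Amat d := by
    rcases hd with rfl | rfl | rfl | rfl | rfl
    · rw [Amat_zero]; decide +kernel
    · rw [Amat_one]; decide +kernel
    · rw [Amat_neg_one, Am1_eq]; decide +kernel
    · rw [Amat_I, Ai_eq]; decide +kernel
    · rw [Amat_neg_I, Ami_eq]; decide +kernel
  rw [← h]
  exact abs_nonneg _

lemma Amat_zero_zero {d : GaussianInt} (hd : d ∈ gD) : Amat d 0 0 = 1 := by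
  rcases hd with rfl | rfl | rfl | rfl | rfl
  · rw [Amat_zero]; decide +kernel
  · rw [Amat_one]; decide +kernel
  · rw [Amat_neg_one, Am1_eq]; decide +kernel
  · rw [Amat_I, Ai_eq]; decide +kernel
  · rw [Amat_neg_I, Ami_eq]; decide +kernel

lemma Amat_mul_R9 {d : GaussianInt} (hd : d ∈ gD) :
    Amat d * R9 = R9 * Amat (gI * d) := by
  have e1 : gI * 1 = gI := by decide
  have e2 : gI * gI = -1 := by decide
  have e3 : gI * -1 = -gI := by decide
  have e4 : gI * -gI = 1 := by decide
  rcases hd with rfl | rfl | rfl | rfl | rfl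
  · rw [mul_zero, Amat_zero]; decide +kernel
  · rw [e1, Amat_one, Amat_I, Ai_eq]; decide +kernel
  · rw [e3, Amat_neg_one, Amat_neg_I, Am1_eq, Ami_eq]; decide +kernel
  · rw [e2, Amat_I, Amat_neg_one, Ai_eq, Am1_eq]; decide +kernel
  · rw [e4, Amat_neg_I, Amat_one, Ami_eq]; decide +kernel

/-- The exchange relation for `C`, which acts on digits by `d ↦ i conj d`. -/
lemma exists_Amat_mul_eq_C9_mul {d : GaussianInt} (hd : d ∈ gD) :
    ∃ Q ∈ symMon, Amat d * Q = C9 * Amat (gI * star d) := by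
  have e0 : gI * star 0 = 0 := by decide
  have e1 : gI * star 1 = gI := by decide
  have e2 : gI * star gI = 1 := by decide
  have e3 : gI * star (-1) = -gI := by decide
  have e4 : gI * star (-gI) = -1 := by decide
  have hCR : C9 * R9 ∈ symMon := mul_mem C9_mem_symMon R9_mem_symMon
  have hCR3 : C9 * R9 ^ 3 ∈ symMon := mul_mem C9_mem_symMon (pow_mem R9_mem_symMon 3)
  rcases hd with rfl | rfl | rfl | rfl | rfl
  · refine ⟨_, hCR3, ?_⟩
    rw [e0, Amat_zero]; decide +kernel
  · refine ⟨_, hCR, ?_⟩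
    rw [e1, Amat_one, Amat_I, Ai_eq]; decide +kernel
  · refine ⟨_, hCR, ?_⟩
    rw [e3, Amat_neg_one, Amat_neg_I, Am1_eq, Ami_eq]; decide +kernel
  · refine ⟨_, hCR, ?_⟩
    rw [e2, Amat_I, Amat_one, Ai_eq]; decide +kernel
  · refine ⟨_, hCR, ?_⟩
    rw [e4, Amat_neg_I, Amat_neg_one, Ami_eq, Am1_eq]; decide +kernel

lemma gD_I_mul {d : GaussianInt} (hd : d ∈ gD) : gI * d ∈ gD ∧ (gI * d = 0 ↔ d = 0) := by
  rcases hd with rfl | rfl | rfl | rfl | rfl <;>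
    simp only [gD, Set.mem_insert_iff, Set.mem_singleton_iff] <;> decide

lemma gD_star {d : GaussianInt} (hd : d ∈ gD) : star d ∈ gD ∧ (star d = 0 ↔ d = 0) := by
  rcases hd with rfl | rfl | rfl | rfl | rfl <;>
    simp only [gD, Set.mem_insert_iff, Set.mem_singleton_iff] <;> decide

/-- A symmetry on the left of a digit matrix can be moved to the right, changing the digit but
not whether it vanishes. -/
lemma symMon_exchange {P : Matrix (Fin 9) (Fin 9) ℤ} (hP : P ∈ symMon) :
    ∀ d ∈ gD, ∃ d' ∈ gD, (d' = 0 ↔ d = 0) ∧ ∃ Q ∈ symMon, Amat d * Q = P * Amat d' := by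
  induction hP using Submonoid.closure_induction with
  | mem x hx =>
    intro d hd
    rcases hx with rfl | rfl
    · exact ⟨gI * d, (gD_I_mul hd).1, (gD_I_mul hd).2, R9, R9_mem_symMon, Amat_mul_R9 hd⟩
    · have hs := gD_star hd
      exact ⟨gI * star d, (gD_I_mul hs.1).1, (gD_I_mul hs.1).2.trans hs.2,
        exists_Amat_mul_eq_C9_mul hd⟩
  | one => exact fun d hd => ⟨d, hd, Iff.rfl, 1, one_mem _, by simp⟩
  | mul x y _ _ ihx ihy =>
    intro d hd
    obtain ⟨d₁, hd₁, hz₁, Q₁, hQ₁, h₁⟩ := ihx d hd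
    obtain ⟨d₂, hd₂, hz₂, Q₂, hQ₂, h₂⟩ := ihy d₁ hd₁
    refine ⟨d₂, hd₂, hz₂.trans hz₁, Q₁ * Q₂, mul_mem hQ₁ hQ₂, ?_⟩
    rw [← mul_assoc, h₁, mul_assoc, h₂, mul_assoc]

lemma symMon_mul_e9 {P : Matrix (Fin 9) (Fin 9) ℤ} (hP : P ∈ symMon) : P * e9ᵀ = e9ᵀ := by
  induction hP using Submonoid.closure_induction with
  | mem x hx => rcases hx with rfl | rfl <;> decide +kernel
  | one => simp
  | mul x y _ _ ihx ihy => rw [Matrix.mul_assoc, ihy, ihx]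

lemma mul_e9_apply (u : Matrix (Fin 1) (Fin 9) ℤ) : (u * e9ᵀ) 0 0 = u 0 0 := by
  simp [Matrix.mul_apply, Fin.sum_univ_succ, e9]

lemma gweight_append (l l' : List GaussianInt) : gweight (l ++ l') = gweight l + gweight l' := by
  simp [gweight]

lemma gweight_singleton_congr {d d' : GaussianInt} (h : d' = 0 ↔ d = 0) :
    gweight [d'] = gweight [d] := by
  by_cases hd : d = 0 <;> simp_all [gweight]

/-- Right multiplication by `A_d` preserves the entrywise order, and strictness in the first
coordinate, because `A_d ≥ 0` has top left entry `1`. -/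
lemma mul_Amat_mono {d : GaussianInt} (hd : d ∈ gD) {u v : Matrix (Fin 1) (Fin 9) ℤ}
    (hle : ∀ j, u 0 j ≤ v 0 j) (hlt : u 0 0 < v 0 0) :
    (∀ j, (u * Amat d) 0 j ≤ (v * Amat d) 0 j) ∧ (u * Amat d) 0 0 < (v * Amat d) 0 0 := by
  have hterm : ∀ i j, u 0 i * Amat d i j ≤ v 0 i * Amat d i j := fun i j =>
    mul_le_mul_of_nonneg_right (hle i) (Amat_nonneg hd i j)
  simp only [Matrix.mul_apply]
  refine ⟨fun j => Finset.sum_le_sum fun i _ => hterm i j, ?_⟩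
  refine Finset.sum_lt_sum (fun i _ => hterm i 0) ⟨0, Finset.mem_univ _, ?_⟩
  simpa [Amat_zero_zero hd] using hlt

/-- The continuation statement for arbitrary row vectors in place of `e A_{d_1} ⋯ A_{d_k}` and
`e A_{f_1} ⋯ A_{f_m}`. -/
lemma exists_continuation (ext : List GaussianInt) (hext : ∀ d ∈ ext, d ∈ gD)
    (u v : Matrix (Fin 1) (Fin 9) ℤ) (P : Matrix (Fin 9) (Fin 9) ℤ) (hP : P ∈ symMon)
    (hle : ∀ j, (u * P) 0 j ≤ v 0 j) (hlt : (u * P) 0 0 < v 0 0) :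
    ∃ l : List GaussianInt, (∀ d ∈ l, d ∈ gD) ∧ gweight l = gweight ext ∧
      (u * (ext.map Amat).prod * e9ᵀ) 0 0 < (v * (l.map Amat).prod * e9ᵀ) 0 0 := by
  induction ext generalizing u v P with
  | nil =>
    refine ⟨[], by simp, rfl, ?_⟩
    rw [← mul_e9_apply (u * P), Matrix.mul_assoc, symMon_mul_e9 hP, ← mul_e9_apply v] at hlt
    simpa using hlt
  | cons d t ih =>
    obtain ⟨d', hd', hz, Q, hQ, hcomm⟩ := symMon_exchange hP d (hext d (by simp))
    obtain ⟨hle', hlt'⟩ := mul_Amat_mono hd' hle hlt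
    have hmove : u * P * Amat d' = u * Amat d * Q := by
      rw [Matrix.mul_assoc, ← hcomm, Matrix.mul_assoc]
    rw [hmove] at hle' hlt'
    obtain ⟨l, hl, hwt, hval⟩ := ih (fun x hx => hext x (by simp [hx])) _ _ Q hQ hle' hlt'
    refine ⟨d' :: l, by simpa using ⟨hd', hl⟩, ?_, ?_⟩
    · rw [← List.singleton_append, gweight_append, gweight_singleton_congr hz, hwt,
        ← gweight_append, List.singleton_append]
    · simpa only [List.map_cons, List.prod_cons, ← Matrix.mul_assoc] using hval

/-- If `e A_{d_1} ⋯ A_{d_k}` is strictly majorised by `e A_{f_1} ⋯ A_{f_m}`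
(both digit sequences having the same number of nonzero terms), then for any
continuation `d_{k+1}, …, d_n` the value `e A_{d_1} ⋯ A_{d_n} eᵀ` is beaten by
some digit sequence with the same total number `N` of nonzero terms. -/
theorem stmt13 (dl fl : List GaussianInt)
    (hdl : ∀ d ∈ dl, d ∈ gD) (hfl : ∀ d ∈ fl, d ∈ gD)
    (hw : gweight dl = gweight fl)
    (hmaj : gsmaj (e9 * (dl.map Amat).prod) (e9 * (fl.map Amat).prod))
    (ext : List GaussianInt) (hext : ∀ d ∈ ext, d ∈ gD) :
    ∃ hl : List GaussianInt, (∀ d ∈ hl, d ∈ gD) ∧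
      gweight hl = gweight (dl ++ ext) ∧
      (e9 * ((dl ++ ext).map Amat).prod * e9ᵀ) 0 0 <
        (e9 * (hl.map Amat).prod * e9ᵀ) 0 0 := by
  obtain ⟨P, hP, hle, hlt⟩ := hmaj
  obtain ⟨l, hl, hwt, hval⟩ :=
    exists_continuation ext hext _ _ P (Pgrp_subset_symMon hP) hle hlt
  refine ⟨fl ++ l, ?_, ?_, ?_⟩
  · intro d hd
    exact (List.mem_append.mp hd).elim (hfl d) (hl d)
  · rw [gweight_append, gweight_append, hw, hwt]
  · simpa only [List.map_append, List.prod_append, ← Matrix.mul_assoc] using hval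
end
end

section
/- Let N ∈ ℕ, N ≥ 1, ω = e^{2πi/3}, β = ω − 1 and D = {0, ±1, ±ω, ±ω²}. If an Eisenstein integer x ∈ ℤ[ω] has a 2-NAF (β, D)-representation containing exactly N nonzero digits, then x has at most s_N optimal representations, where s_N = ⌊(6·2^N + 1)/7⌋. -/
/-!
Write `ζ = 1 + ω`, a primitive sixth root of unity; the nonzero digits are the powers of `ζ`.
Let `R x k` be the number of normalized representations of `x` of weight `k`. Removing the least
significant digit gives `R (β x) k ≤ R x k` and, for a unit `u`,
`R (u + β x) (k + 1) ≤ R x k + R (x - u) k + R (x - u ζ) k`,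
because the digits congruent to `u` modulo `β` are `u`, `u ω` and `u ω²`.

For a number `y` whose 2-NAF has weight `n` put `M y n r = R (y + r) (n - 1)`, with `r` a unit.
Induction along the 2-NAF shows that `y` has no representation of weight `< n` and `y + r` has none
of weight `< n - 1`. For `y = v + β² z` (`v` a unit, `z` of weight `n`) the recursion also yields
* `R y (n+1) ≤ R z n + M z n v + 2 M z n (v ζ) + M z n (v ζ²)`,
* `M y (n+1) r ≤` respectively `M z n (v ζ)`, `M z n (v ζ) + M z n (v ζ²)`, `0`, `R z n`, `0`,
  `M z n v + M z n (v ζ)` for `r = v, v ζ, …, v ζ⁵`.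

Thus the seven numbers `R y n`, `M y n (ζ^j)` are controlled by a linear system, and explicit
componentwise upper bounds (`StateInv`), of period three in `n`, are preserved by all six choices
of `v`. The bound for the component `R y n` is `s_n`; as there are no lighter
representations, `R y n` bounds the number of optimal representations.
-/

open Matrix

noncomputable section

/-- The primitive cube root of unity `ω = exp(2πi/3)`. -/
def ω : ℂ := Complex.exp (2 * Real.pi * Complex.I / 3)

/-- The base `β = ω - 1`. -/
def eβ : ℂ := ω - 1

/-- The digit set `D = {0, ±1, ±ω, ±ω²}`. -/
def eD : Set ℂ := {0, 1, -1, ω, -ω, ω ^ 2, -ω ^ 2}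

/-- The ring of Eisenstein integers `ℤ[ω]`, as a subset of `ℂ`. -/
def EisZ : Set ℂ := {x | ∃ a b : ℤ, x = (a : ℂ) + (b : ℂ) * ω}

/-- Value of a digit string `d_{n-1} ⋯ d_0`, given as a list with the least
significant digit first: `eval [d_0, d_1, …, d_{n-1}] = Σ d_j β^j`. -/
def evalE (l : List ℂ) : ℂ :=
  l.foldr (fun d acc => d + eβ * acc) 0

/-- `l` (least significant digit first) is a `(β, D)`-representation of `x`. -/
def eIsRep (x : ℂ) (l : List ℂ) : Prop :=
  (∀ d ∈ l, d ∈ eD) ∧ evalE l = x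

/-- A representation is normalized if it is empty or its leading digit
(the last entry of the LSD-first list) is nonzero. -/
def eNormalized (l : List ℂ) : Prop := l.getLast? ≠ some 0

open scoped Classical in
/-- Number of nonzero digits (Hamming weight). -/
def eweight (l : List ℂ) : ℕ := (l.filter (fun d => d ≠ 0)).length

/-- `W`-NAF property: among any `W` consecutive digits at most one is nonzero. -/
def eNAF (W : ℕ) (l : List ℂ) : Prop :=
  ∀ j k : ℕ, j < k → k < j + W → l.getD j 0 ≠ 0 → l.getD k 0 = 0

/-- A representation of `x` is optimal if it is normalized and its number of
nonzero digits is minimal among all representations of `x`. -/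
def eOptimal (x : ℂ) (l : List ℂ) : Prop :=
  eIsRep x l ∧ eNormalized l ∧ ∀ l' : List ℂ, eIsRep x l' → eweight l ≤ eweight l'

/-- The number of optimal representations of `x`. -/
def enumOpt (x : ℂ) : ℕ := Nat.card {l : List ℂ // eOptimal x l}

/-- The sequence `s_N = ⌊(6·2^N + 1)/7⌋`. -/
def sseq (N : ℕ) : ℕ := (6 * 2 ^ N + 1) / 7

/-! ### Eisenstein integers and units -/

/-- The primitive sixth root of unity `1 + ω = -ω²`. -/
def zt : ℂ := 1 + ω

lemma om_rel : ω ^ 2 = -1 - ω := by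
  have h3 : ω ^ 3 = 1 := by
    rw [ω, ← Complex.exp_nat_mul]
    rw [show ((3 : ℕ) : ℂ) * (2 * Real.pi * Complex.I / 3) = 2 * Real.pi * Complex.I by
      push_cast; ring]
    exact Complex.exp_two_pi_mul_I
  have h1 : ω ≠ 1 := by
    intro h
    have := (Complex.isPrimitiveRoot_exp 3 (by norm_num)).ne_one (by norm_num)
    apply this
    rw [← h, ω]; norm_num
  have : (ω - 1) * (ω ^ 2 + ω + 1) = 0 := by linear_combination h3
  rcases mul_eq_zero.1 this with h | h
  · exact absurd (sub_eq_zero.1 h) h1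
  · linear_combination h

lemma zt_sq : zt ^ 2 = zt - 1 := by
  have := om_rel
  unfold zt; linear_combination this

lemma om_eq : ω = zt - 1 := by unfold zt; ring

lemma beta_eq : eβ = zt - 2 := by unfold eβ zt; ring

lemma zt_three : zt ^ 3 = -1 := by linear_combination (zt + 1) * zt_sq

lemma zt_six : zt ^ 6 = 1 := by linear_combination (zt ^ 3 - 1) * zt_three

lemma zt_ne : zt ≠ 0 := by
  intro h; have := zt_six; rw [h] at this; norm_num at this

/-- `1` and `ω` are linearly independent over `ℤ`: the norm `p² - p q + q²` of `p + q ω` is a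
positive definite form. -/
lemma om_indep (p q : ℤ) (h : (p : ℂ) + q * ω = 0) : p = 0 ∧ q = 0 := by
  have h1 : ((p ^ 2 - p * q + q ^ 2 : ℤ) : ℂ) = 0 := by
    push_cast
    linear_combination (p - q - q * ω) * h + (q : ℂ) ^ 2 * om_rel
  have h2 : p ^ 2 - p * q + q ^ 2 = 0 := by exact_mod_cast h1
  constructor <;> nlinarith [sq_nonneg (p - q), sq_nonneg p, sq_nonneg q, sq_nonneg (2 * p - q),
    sq_nonneg (p - 2 * q)]

lemma beta_ne : eβ ≠ 0 := by
  intro h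
  have := om_indep (-1) 1 (by push_cast; unfold eβ at h; linear_combination h)
  omega

/-- `EisZ` as a subring of `ℂ`. -/
def EisR : Subring ℂ where
  carrier := EisZ
  mul_mem' := by
    rintro _ _ ⟨a, b, rfl⟩ ⟨c, d, rfl⟩
    exact ⟨a * c - b * d, a * d + b * c - b * d, by
      push_cast; linear_combination (b * d : ℂ) * om_rel⟩
  one_mem' := ⟨1, 0, by simp⟩
  add_mem' := by
    rintro _ _ ⟨a, b, rfl⟩ ⟨c, d, rfl⟩
    exact ⟨a + c, b + d, by push_cast; ring⟩
  zero_mem' := ⟨0, 0, by simp⟩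
  neg_mem' := by
    rintro _ ⟨a, b, rfl⟩
    exact ⟨-a, -b, by push_cast; ring⟩

lemma om_mem : ω ∈ EisR := ⟨0, 1, by simp⟩

lemma zt_mem : zt ∈ EisR := add_mem (one_mem _) om_mem

lemma beta_mem : eβ ∈ EisR := sub_mem om_mem (one_mem _)

/-- The units of `ℤ[ω]`, i.e. the powers of `ζ`. -/
def IsU (u : ℂ) : Prop := ∃ i : ℕ, u = zt ^ i

lemma IsU.mul {u v : ℂ} (hu : IsU u) (hv : IsU v) : IsU (u * v) := by
  obtain ⟨i, rfl⟩ := hu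
  obtain ⟨j, rfl⟩ := hv
  exact ⟨i + j, (pow_add _ _ _).symm⟩

lemma isU_zt : IsU zt := ⟨1, by simp⟩

lemma isU_pow (i : ℕ) : IsU (zt ^ i) := ⟨i, rfl⟩

lemma IsU.neg {u : ℂ} (hu : IsU u) : IsU (-u) := by
  have := hu.mul (isU_pow 3)
  rw [zt_three] at this
  simpa using this

lemma IsU.mem {u : ℂ} (hu : IsU u) : u ∈ EisR := by
  obtain ⟨i, rfl⟩ := hu
  exact pow_mem zt_mem i

lemma IsU.ne {u : ℂ} (hu : IsU u) : u ≠ 0 := by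
  obtain ⟨i, rfl⟩ := hu
  exact pow_ne_zero _ zt_ne

lemma isU_ratio {u v : ℂ} (hu : IsU u) (hv : IsU v) : ∃ i < 6, v = u * zt ^ i := by
  obtain ⟨a, rfl⟩ := hu
  obtain ⟨b, rfl⟩ := hv
  refine ⟨(b + 5 * a) % 6, Nat.mod_lt _ (by norm_num), ?_⟩
  rw [← pow_mod_orderOf zt b, ← pow_add, ← pow_mod_orderOf zt (a + _)]
  congr 1
  have h : orderOf zt ∣ 6 := orderOf_dvd_of_pow_eq_one zt_six
  have e : (a + (b + 5 * a) % 6) ≡ b [MOD 6] := by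
    unfold Nat.ModEq; omega
  exact (e.of_dvd h).symm

lemma zt_pow_four : zt ^ 4 = -zt := by linear_combination zt * zt_three

lemma zt_pow_five : zt ^ 5 = 1 - zt := by linear_combination zt ^ 2 * zt_three - zt_sq

lemma digit_cases {d : ℂ} (hd : d ∈ eD) : d = 0 ∨ IsU d := by
  have h2 := zt_sq
  have h3 := zt_three
  have h4 := zt_pow_four
  have h5 := zt_pow_five
  simp only [eD, Set.mem_insert_iff, Set.mem_singleton_iff] at hd
  rcases hd with h | h | h | h | h | h | h
  · exact Or.inl h
  · exact Or.inr ⟨0, by rw [h]; simp⟩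
  · exact Or.inr ⟨3, by rw [h, h3]⟩
  · exact Or.inr ⟨2, by rw [h, h2, om_eq]⟩
  · exact Or.inr ⟨5, by rw [h, h5, om_eq]; ring⟩
  · exact Or.inr ⟨4, by rw [h, h4, om_rel, om_eq]; ring⟩
  · exact Or.inr ⟨1, by rw [h, om_rel, om_eq]; ring⟩

/-- `β (a + b ω) = p + q ω` forces `3 ∣ p + q`. -/
lemma beta_dvd {e : ℂ} (he : e ∈ EisR) (p q : ℤ) (h : eβ * e = p + q * ω) :
    (3 : ℤ) ∣ p + q := by
  obtain ⟨a, b, rfl⟩ := he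
  have := om_indep (p + a + b) (q - a + 2 * b) (by
    push_cast
    unfold eβ at h
    linear_combination -h + (b : ℂ) * om_rel)
  omega

/-- A unit is not divisible by `β`. -/
lemma unit_ndvd {u e : ℂ} (hu : IsU u) (he : e ∈ EisR) : eβ * e ≠ u := by
  intro h
  obtain ⟨i, hi, h1⟩ := isU_ratio hu (isU_pow 0)
  have h2 : eβ * (e * zt ^ i) = ((1 : ℤ) : ℂ) + ((0 : ℤ) : ℂ) * ω := by
    rw [← mul_assoc, h, ← h1]; simp
  have := beta_dvd (mul_mem he (pow_mem zt_mem i)) 1 0 h2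
  omega

/-- The digits congruent to the unit `u` modulo `β` are `u`, `u ω = u ζ²` and `u ω² = - u ζ`. -/
lemma digit_congr {u d e : ℂ} (hu : IsU u) (hd : d ∈ eD) (he : e ∈ EisR)
    (h : d = u + eβ * e) : d = u ∨ d = u * zt ^ 2 ∨ d = u * zt ^ 4 := by
  rcases digit_cases hd with h0 | hdU
  · exact absurd (show eβ * e = -u by rw [h0] at h; linear_combination -h) (unit_ndvd hu.neg he)
  · obtain ⟨i, hi, h1⟩ := isU_ratio hu hdU
    obtain ⟨j, hj, h2⟩ := isU_ratio hu (isU_pow 0)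
    have key : eβ * (e * zt ^ j) = zt ^ i - 1 := by
      have : u * zt ^ j = 1 := by rw [← h2]; simp
      rw [h1] at h
      linear_combination (-zt ^ j) * h + (zt ^ i - 1) * this
    have hm := mul_mem he (pow_mem zt_mem j)
    have h2 := zt_sq
    have h3 := zt_three
    have h4 := zt_pow_four
    have h5 := zt_pow_five
    interval_cases i
    · left; simpa using h1
    · have := beta_dvd hm 0 1 (by rw [key, om_eq]; push_cast; ring)
      omega
    · right; left; exact h1
    · have := beta_dvd hm (-2) 0 (by rw [key, h3]; push_cast; ring)
      omega
    · right; right; exact h1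
    · have := beta_dvd hm (-1) (-1) (by rw [key, h5, om_eq]; push_cast; ring)
      omega

/-! ### Counting representations of given weight -/

/-- The normalized representations of `x` of weight `k`. -/
def RS (x : ℂ) (k : ℕ) : Set (List ℂ) := {l | eIsRep x l ∧ eNormalized l ∧ eweight l = k}

/-- The number of normalized representations of `x` of weight `k`. -/
def R (x : ℂ) (k : ℕ) : ℕ∞ := (RS x k).encard

lemma evalE_cons (d : ℂ) (l : List ℂ) : evalE (d :: l) = d + eβ * evalE l := rfl

lemma eweight_nil : eweight [] = 0 := by simp [eweight]

lemma eweight_zero_cons (l : List ℂ) : eweight (0 :: l) = eweight l := by simp [eweight]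

lemma eweight_cons {d : ℂ} (hd : d ≠ 0) (l : List ℂ) : eweight (d :: l) = eweight l + 1 := by
  simp [eweight, hd]

lemma normalized_tail {d : ℂ} {l : List ℂ} (h : eNormalized (d :: l)) : eNormalized l := by
  unfold eNormalized at *
  cases l with
  | nil => simp
  | cons a t => simpa [List.getLast?_cons_cons] using h

lemma digit_mem {d : ℂ} (hd : d ∈ eD) : d ∈ EisR := by
  rcases digit_cases hd with h | h
  · rw [h]; exact zero_mem _
  · exact h.mem

lemma evalE_mem (l : List ℂ) (h : ∀ d ∈ l, d ∈ eD) : evalE l ∈ EisR := by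
  induction l with
  | nil => exact zero_mem _
  | cons d l ih =>
    rw [evalE_cons]
    exact add_mem (digit_mem (h d (by simp)))
      (mul_mem beta_mem (ih fun e he => h e (by simp [he])))

lemma R_beta {x : ℂ} (hx : x ∈ EisR) (k : ℕ) : R (eβ * x) k ≤ R x k := by
  by_cases h0 : x = 0
  · simp [h0]
  have hsub : RS (eβ * x) k ⊆ (fun l => (0 : ℂ) :: l) '' RS x k := by
    rintro l ⟨⟨hd, he⟩, hn, hw⟩
    cases l with
    | nil =>
      exact absurd he.symm (mul_ne_zero beta_ne h0)
    | cons d l =>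
      have hl : evalE l ∈ EisR := evalE_mem l fun e he => hd e (by simp [he])
      rw [evalE_cons] at he
      rcases digit_cases (hd d (by simp)) with h | h
      · subst h
        refine ⟨l, ⟨⟨fun e he => hd e (by simp [he]), ?_⟩, normalized_tail hn, ?_⟩, rfl⟩
        · exact mul_left_cancel₀ beta_ne (by linear_combination he)
        · rw [← hw, eweight_zero_cons]
      · exact absurd (show eβ * (x - evalE l) = d by linear_combination -he)
          (unit_ndvd h (sub_mem hx hl))
  exact (Set.encard_le_encard hsub).trans (Set.encard_image_le _ _)

lemma R_unit_zero {u x : ℂ} (hu : IsU u) (hx : x ∈ EisR) : R (u + eβ * x) 0 = 0 := by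
  rw [R, Set.encard_eq_zero, Set.eq_empty_iff_forall_notMem]
  rintro l ⟨⟨hd, he⟩, hn, hw⟩
  cases l with
  | nil =>
    exact unit_ndvd hu.neg hx (by
      have : (0 : ℂ) = u + eβ * x := he
      linear_combination -this)
  | cons d l =>
    have hl : evalE l ∈ EisR := evalE_mem l fun e he => hd e (by simp [he])
    rw [evalE_cons] at he
    have hd0 : d ≠ 0 := by
      rintro rfl
      exact unit_ndvd hu (sub_mem hl hx) (by linear_combination he)
    rw [eweight_cons hd0] at hw
    omega

lemma R_unit {u x : ℂ} (hu : IsU u) (hx : x ∈ EisR) (k : ℕ) :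
    R (u + eβ * x) (k + 1) ≤ R x k + R (x - u) k + R (x - u * zt) k := by
  have hsub : RS (u + eβ * x) (k + 1) ⊆ ((fun l => u :: l) '' RS x k ∪
      (fun l => (u * zt ^ 2) :: l) '' RS (x - u) k) ∪
      (fun l => (u * zt ^ 4) :: l) '' RS (x - u * zt) k := by
    rintro l ⟨⟨hd, he⟩, hn, hw⟩
    cases l with
    | nil => simp [eweight_nil] at hw
    | cons d l =>
      have hdl : ∀ e ∈ l, e ∈ eD := fun e he => hd e (by simp [he])
      have hl : evalE l ∈ EisR := evalE_mem l hdl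
      rw [evalE_cons] at he
      have hc := digit_congr hu (hd d (by simp)) (sub_mem hx hl)
        (by linear_combination he)
      have hd0 : d ≠ 0 := by
        rcases hc with h | h | h <;> rw [h]
        · exact hu.ne
        · exact (hu.mul (isU_pow 2)).ne
        · exact (hu.mul (isU_pow 4)).ne
      have hw' : eweight l = k := by
        rw [eweight_cons hd0] at hw; omega
      have hn' := normalized_tail hn
      rcases hc with h | h | h
      · left; left
        refine ⟨l, ⟨⟨hdl, mul_left_cancel₀ beta_ne ?_⟩, hn', hw'⟩, by rw [h]⟩
        linear_combination he - h
      · left; right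
        refine ⟨l, ⟨⟨hdl, mul_left_cancel₀ beta_ne ?_⟩, hn', hw'⟩, by rw [h]⟩
        rw [beta_eq] at *
        linear_combination he - h - u * zt_sq
      · right
        refine ⟨l, ⟨⟨hdl, mul_left_cancel₀ beta_ne ?_⟩, hn', hw'⟩, by rw [h]⟩
        rw [beta_eq] at *
        linear_combination he - h - u * zt_pow_four + u * zt_sq
  refine (Set.encard_le_encard hsub).trans ((Set.encard_union_le _ _).trans ?_)
  refine add_le_add ((Set.encard_union_le _ _).trans (add_le_add ?_ ?_)) ?_ <;>
  exact Set.encard_image_le _ _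

lemma R_nil : R 0 0 ≤ 1 := by
  have : RS 0 0 ⊆ {[]} := by
    rintro l ⟨_, hn, hw⟩
    by_contra hne
    have hne : l ≠ [] := hne
    unfold eNormalized at hn
    rw [List.getLast?_eq_some_getLast hne] at hn
    have hm : l.getLast hne ∈ l.filter (fun d => d ≠ 0) := by
      simp only [List.mem_filter]
      exact ⟨List.getLast_mem hne, by simpa using hn⟩
    have := List.length_pos_of_mem hm
    simp only [eweight] at hw
    simp at this hw
    grind
  exact (Set.encard_le_encard this).trans (by simp)

/-! ### The linear system along the 2-NAF -/

/-- The number of representations of `y + r` of weight `n - 1`, taken to be `0` if `n = 0`. -/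
def M (y : ℂ) (n : ℕ) (r : ℂ) : ℕ∞ :=
  match n with
  | 0 => 0
  | k + 1 => R (y + r) k

/-- `y` has no representation of weight less than `n`, and its neighbours `y + r` have none of
weight less than `n - 1`. -/
structure LB (y : ℂ) (n : ℕ) : Prop where
  mem : y ∈ EisR
  self : ∀ k < n, R y k = 0
  nbr : ∀ r, IsU r → ∀ k, k + 1 < n → R (y + r) k = 0

variable {z v : ℂ} {n : ℕ}

/-- A pending carry `v` never makes `β z` lighter than `z`. -/
lemma carry_lt (h : LB z n) (hs : IsU v) {k : ℕ} (hk : k < n) : R (v + eβ * z) k = 0 := by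
  cases k with
  | zero => exact R_unit_zero hs h.mem
  | succ k =>
    have := R_unit hs h.mem k
    rw [h.self k (by omega), sub_eq_add_neg, h.nbr _ hs.neg k hk, sub_eq_add_neg,
      h.nbr _ (hs.mul isU_zt).neg k hk] at this
    simpa using this

lemma carry_eq (h : LB z n) (hs : IsU v) :
    R (v + eβ * z) n ≤ M z n (-v) + M z n (-(v * zt)) := by
  cases n with
  | zero => rw [R_unit_zero hs h.mem]; exact zero_le
  | succ k =>
    have := R_unit hs h.mem k
    rw [h.self k (by omega), zero_add, sub_eq_add_neg, sub_eq_add_neg] at this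
    exact this

lemma naf_lt (h : LB z n) (hv : IsU v) {k : ℕ} (hk : k < n + 1) :
    R (v + eβ * (eβ * z)) k = 0 := by
  have hm := mul_mem beta_mem h.mem
  cases k with
  | zero => exact R_unit_zero hv hm
  | succ k =>
    have := R_unit hv hm k
    have h1 := (R_beta h.mem k)
    rw [h.self k (by omega)] at h1
    rw [nonpos_iff_eq_zero.1 h1, sub_eq_add_neg, sub_eq_add_neg, add_comm (eβ * z) (-v),
      add_comm (eβ * z) (-(v * zt)), carry_lt h hv.neg (by omega),
      carry_lt h (hv.mul isU_zt).neg (by omega)] at this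
    simpa using this

lemma naf_eq (h : LB z n) (hv : IsU v) :
    R (v + eβ * (eβ * z)) (n + 1) ≤
      R z n + (M z n v + M z n (v * zt)) + (M z n (v * zt) + M z n (v * zt ^ 2)) := by
  have hm := mul_mem beta_mem h.mem
  refine (R_unit hv hm n).trans (add_le_add (add_le_add (R_beta h.mem n) ?_) ?_)
  · have := carry_eq h hv.neg
    rw [sub_eq_add_neg, add_comm (eβ * z) (-v)]
    simpa using this
  · have := carry_eq h (hv.mul isU_zt).neg
    rw [sub_eq_add_neg, add_comm (eβ * z) (-(v * zt))]
    rw [show v * zt ^ 2 = -(-(v * zt) * zt) by ring]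
    simpa using this

/-- The neighbour `y + v` of `y = v + β² z`: the two alternative continuations with a further
carry are too heavy, so only representations of `z + v ζ` contribute. -/
lemma nbr0_le (h : LB z n) (hv : IsU v) {k : ℕ} (hk : k < n + 1) :
    R (v + eβ * (eβ * z) + v) k ≤ if k = n then M z n (v * zt) else 0 := by
  -- `2 v + β² z = -v + β² (z + v ζ)`, since `β² ζ = 3`.
  have e : v + eβ * (eβ * z) + v = -v + eβ * (eβ * (z + v * zt)) := by
    rw [beta_eq]
    linear_combination (-(v * zt) + 3 * v) * zt_sq
  have hZ : z + v * zt ∈ EisR := add_mem h.mem (hv.mul isU_zt).mem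
  have hm := mul_mem beta_mem hZ
  rw [e]
  cases k with
  | zero => rw [R_unit_zero hv.neg hm]; exact zero_le
  | succ k =>
    have h1 : R (eβ * (z + v * zt) - -v) k = 0 ∧ R (eβ * (z + v * zt) - -v * zt) k = 0 := by
      rw [show eβ * (z + v * zt) - -v = v + eβ * (z + v * zt) by ring,
        show eβ * (z + v * zt) - -v * zt = v * zt + eβ * (z + v * zt) by ring]
      cases k with
      | zero => exact ⟨R_unit_zero hv hZ, R_unit_zero (hv.mul isU_zt) hZ⟩
      | succ k =>
        have a0 := h.nbr _ (hv.mul isU_zt) k (by omega)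
        have a1 := h.nbr _ (hv.mul (isU_pow 2)) k (by omega)
        have a2 := h.self k (by omega)
        have a3 := h.nbr _ hv k (by omega)
        have b1 := R_unit hv hZ k
        have b2 := R_unit (hv.mul isU_zt) hZ k
        rw [show z + v * zt - v = z + v * zt ^ 2 by rw [zt_sq]; ring,
          show z + v * zt - v * zt = z by ring, a0, a1, a2] at b1
        rw [show z + v * zt - v * zt * zt = z + v by linear_combination -v * zt_sq,
          show z + v * zt - v * zt = z by ring, a0, a3, a2] at b2
        exact ⟨by simpa using b1, by simpa using b2⟩
    have h2 := R_unit hv.neg hm k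
    rw [h1.1, h1.2, add_zero, add_zero] at h2
    refine h2.trans ((R_beta hZ k).trans ?_)
    split_ifs with hkn
    · subst hkn; exact le_rfl
    · rw [h.nbr _ (hv.mul isU_zt) k (by omega)]

/-! The identities `nbr1`, …, `nbr5` rewrite `y + v ζ^j`, where `y = v + β² z`, in a form to which
the carry or 2-NAF lemmas apply. -/

lemma nbr1 (z : ℂ) (v : ℂ) :
    v + eβ * (eβ * z) + v * zt = eβ * (-(v * zt) + eβ * z) := by
  rw [beta_eq]
  linear_combination v * zt_sq

lemma nbr5 (z : ℂ) (v : ℂ) :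
    v + eβ * (eβ * z) + v * zt ^ 5 = eβ * (-v + eβ * z) := by
  rw [zt_pow_five, beta_eq]
  ring

lemma nbr2 (z : ℂ) (v : ℂ) :
    v + eβ * (eβ * z) + v * zt ^ 2 = v * zt + eβ * (eβ * z) := by
  rw [zt_sq]; ring

lemma nbr3 (z : ℂ) (v : ℂ) :
    v + eβ * (eβ * z) + v * zt ^ 3 = eβ * (eβ * z) := by
  rw [zt_three]; ring

lemma nbr4 (z : ℂ) (v : ℂ) :
    v + eβ * (eβ * z) + v * zt ^ 4 = v * zt ^ 5 + eβ * (eβ * z) := by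
  rw [zt_pow_five, zt_pow_four]; ring

lemma carry_mem (h : LB z n) (hv : IsU v) : v + eβ * z ∈ EisR :=
  add_mem hv.mem (mul_mem beta_mem h.mem)

lemma LB.step (h : LB z n) (hv : IsU v) : LB (v + eβ * (eβ * z)) (n + 1) where
  mem := add_mem hv.mem (mul_mem beta_mem (mul_mem beta_mem h.mem))
  self k hk := naf_lt h hv hk
  nbr r hr k hk := by
    have hk' : k < n := by omega
    obtain ⟨i, hi, rfl⟩ := isU_ratio hv hr
    interval_cases i
    · have := nbr0_le h hv (k := k) (by omega)
      rw [if_neg (by omega)] at this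
      simpa using this
    · rw [pow_one, nbr1]
      have := R_beta (carry_mem h (hv.mul isU_zt).neg) k
      rw [carry_lt h (hv.mul isU_zt).neg hk'] at this
      simpa using this
    · rw [nbr2]; exact naf_lt h (hv.mul isU_zt) (by omega)
    · rw [nbr3]
      have := (R_beta (mul_mem beta_mem h.mem) k).trans (R_beta h.mem k)
      rw [h.self k hk'] at this
      simpa using this
    · rw [nbr4]; exact naf_lt h (hv.mul (isU_pow 5)) (by omega)
    · rw [nbr5]
      have := R_beta (carry_mem h hv.neg) k
      rw [carry_lt h hv.neg hk'] at this
      simpa using this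

lemma LB.zero_step (h : LB z n) : LB (eβ * z) n where
  mem := mul_mem beta_mem h.mem
  self k hk := by
    have := R_beta h.mem k
    rw [h.self k hk] at this
    simpa using this
  nbr r hr k hk := by
    rw [add_comm]; exact carry_lt h hr (by omega)

/-- Upper bounds for the state `(R y n, M y n (v ζ^j))` of `y`, relative to a unit `v`
(the least significant nonzero digit of the 2-NAF). -/
structure Dom (y : ℂ) (n C a b p : ℕ) : Prop where
  lb : LB y n
  cnt : R y n ≤ C
  nbrs : ∃ v, IsU v ∧ M y n v ≤ a ∧ M y n (v * zt) ≤ b ∧ M y n (v * zt ^ 2) ≤ 0 ∧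
    M y n (v * zt ^ 3) ≤ p ∧ M y n (v * zt ^ 4) ≤ 0 ∧ M y n (v * zt ^ 5) ≤ b

lemma Dom.mono {y : ℂ} {C a b p C' a' b' p' : ℕ} (h : Dom y n C a b p)
    (hC : C ≤ C') (ha : a ≤ a') (hb : b ≤ b') (hp : p ≤ p') : Dom y n C' a' b' p' := by
  obtain ⟨h1, h2, v, hv, m0, m1, m2, m3, m4, m5⟩ := h
  have q {x y : ℕ} (h : x ≤ y) : (x : ℕ∞) ≤ y := by exact_mod_cast h
  exact ⟨h1, h2.trans (q hC), v, hv, m0.trans (q ha), m1.trans (q hb), m2, m3.trans (q hp), m4,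
    m5.trans (q hb)⟩

lemma Dom.zero_step {C a b p : ℕ} (h : Dom z n C a b p) : Dom (eβ * z) n C a b p := by
  obtain ⟨h1, h2, v, hv, -⟩ := h
  have key (r : ℂ) (hr : IsU r) (x : ℕ∞) : M (eβ * z) n r ≤ x := by
    cases n with
    | zero => exact zero_le
    | succ k =>
      change R (eβ * z + r) k ≤ x
      rw [add_comm, carry_lt h1 hr (by omega)]
      exact zero_le
  exact ⟨h1.zero_step, (R_beta h1.mem n).trans h2, v, hv, key _ hv _, key _ (hv.mul isU_zt) _,
    key _ (hv.mul (isU_pow 2)) _, key _ (hv.mul (isU_pow 3)) _, key _ (hv.mul (isU_pow 4)) _,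
    key _ (hv.mul (isU_pow 5)) _⟩

lemma dom_of_bounds {C x0 x1 x2 b : ℕ} (h : LB z n) (hv : IsU v) (hC : R z n ≤ C)
    (h0 : M z n v ≤ x0) (h1 : M z n (v * zt) ≤ x1) (h2 : M z n (v * zt ^ 2) ≤ x2)
    (hb1 : x1 + x2 ≤ b) (hb2 : x0 + x1 ≤ b) :
    Dom (v + eβ * (eβ * z)) (n + 1) (C + x0 + 2 * x1 + x2) x1 b C := by
  have q {x y : ℕ} (h : x ≤ y) : (x : ℕ∞) ≤ y := by exact_mod_cast h
  refine ⟨h.step hv, ?_, v, hv, ?_, ?_, ?_, ?_, ?_, ?_⟩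
  · refine (naf_eq h hv).trans
      ((add_le_add (add_le_add hC (add_le_add h0 h1)) (add_le_add h1 h2)).trans (le_of_eq ?_))
    push_cast; ring
  · have := nbr0_le h hv (k := n) (by omega)
    rw [if_pos rfl] at this
    exact this.trans h1
  · change R _ n ≤ _
    rw [nbr1]
    refine (R_beta (carry_mem h (hv.mul isU_zt).neg) n).trans
      ((carry_eq h (hv.mul isU_zt).neg).trans ?_)
    rw [show -(-(v * zt) * zt) = v * zt ^ 2 by ring, neg_neg]
    exact (add_le_add h1 h2).trans (by rw [← Nat.cast_add]; exact q hb1)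
  · change R _ n ≤ _
    rw [nbr2, naf_lt h (hv.mul isU_zt) (by omega)]
  · change R _ n ≤ _
    rw [nbr3]
    exact ((R_beta (mul_mem beta_mem h.mem) n).trans (R_beta h.mem n)).trans hC
  · change R _ n ≤ _
    rw [nbr4, naf_lt h (hv.mul (isU_pow 5)) (by omega)]
  · change R _ n ≤ _
    rw [nbr5]
    refine (R_beta (carry_mem h hv.neg) n).trans ((carry_eq h hv.neg).trans ?_)
    rw [neg_mul, neg_neg, neg_neg]
    exact (add_le_add h0 h1).trans (by rw [← Nat.cast_add]; exact q hb2)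

/-- One 2-NAF block. The second alternative occurs when the new digit is `v ζ²`, with `v` the
reference unit of the old state. -/
lemma Dom.step {u : ℂ} {C a b p C1 a1 b1 : ℕ} (h : Dom z n C a b p) (hu : IsU u)
    (e1 : C + 2 * a + 2 * b ≤ C1) (e2 : C + b + p ≤ C1) (e3 : a ≤ a1) (e4 : b ≤ a1)
    (e5 : a + b ≤ b1) (e6 : p ≤ b1) :
    Dom (u + eβ * (eβ * z)) (n + 1) C1 a1 b1 C ∨
      Dom (u + eβ * (eβ * z)) (n + 1) (C + 2 * p) p p C := by
  obtain ⟨hl, hC, v, hv, m0, m1, m2, m3, m4, m5⟩ := h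
  have m2' : M z n (v * zt ^ 2) ≤ (0 : ℕ) := by simpa using m2
  have m4' : M z n (v * zt ^ 4) ≤ (0 : ℕ) := by simpa using m4
  obtain ⟨i, hi, rfl⟩ := isU_ratio hv hu
  have h6 := zt_six
  interval_cases i
  · left
    rw [pow_zero, mul_one]
    exact (dom_of_bounds hl hv hC m0 m1 m2' (b := b1) (by omega) (by omega)).mono
      (by omega) (by omega) (by omega) le_rfl
  · left
    exact (dom_of_bounds hl hu hC (by simpa using m1) (by convert m2' using 2; ring)
      (by convert m3 using 2; ring) (b := b1) (by omega) (by omega)).mono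
      (by omega) (by omega) (by omega) le_rfl
  · right
    exact (dom_of_bounds hl hu hC m2' (by convert m3 using 2; ring)
      (by convert m4' using 2; ring) (b := p) (by omega) (by omega)).mono
      (by omega) (by omega) (by omega) le_rfl
  · left
    exact (dom_of_bounds hl hu hC m3 (by convert m4' using 2; ring)
      (by convert m5 using 2; ring) (b := b1) (by omega) (by omega)).mono
      (by omega) (by omega) (by omega) le_rfl
  · left
    exact (dom_of_bounds hl hu hC m4' (by convert m5 using 2; ring)
      (by convert m0 using 2; linear_combination v * h6) (b := b1) (by omega) (by omega)).mono
      (by omega) (by omega) (by omega) le_rfl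
  · left
    exact (dom_of_bounds hl hu hC m5 (by convert m0 using 2; linear_combination v * h6)
      (by convert m1 using 2; linear_combination v * zt * h6) (b := b1)
      (by omega) (by omega)).mono
      (by omega) (by omega) (by omega) le_rfl

/-! ### The invariant -/

/-- The state of `y` is bounded by an extremal state of weight `n`. Apart from `n = 0`, the three
families belong to `n ≡ 1, 2, 0` modulo `3`, with `w = s_{n-2}`, `s_{n-2}`, `s_{n-3}` respectively
(and `w = 0` for `n = 1`). The equations between `w` and `2 ^ n` determine the residue of `n` and
say that the first entry is `s_n`, except in the very last state, where it is `s_n - 2`. -/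
def StateInv (y : ℂ) (n : ℕ) : Prop :=
  (n = 0 ∧ Dom y n 1 0 0 0) ∨
  (∃ w, 28 * w + 12 = 6 * 2 ^ n ∧ Dom y n (4 * w + 1) w w (2 * w + 1)) ∨
  (∃ w, 28 * w = 6 * 2 ^ n + 4 ∧ Dom y n (4 * w - 1) w w (2 * w - 1)) ∨
  (∃ w, 56 * w = 6 * 2 ^ n + 8 ∧ (Dom y n (8 * w - 1) w (2 * w) (4 * w - 1) ∨
    Dom y n (8 * w - 3) (2 * w - 1) (2 * w - 1) (4 * w - 1)))

lemma StateInv.zero_step (h : StateInv z n) : StateInv (eβ * z) n := by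
  rcases h with ⟨h0, h⟩ | ⟨w, hw, h⟩ | ⟨w, hw, h⟩ | ⟨w, hw, h | h⟩
  · exact Or.inl ⟨h0, h.zero_step⟩
  · exact Or.inr (Or.inl ⟨w, hw, h.zero_step⟩)
  · exact Or.inr (Or.inr (Or.inl ⟨w, hw, h.zero_step⟩))
  · exact Or.inr (Or.inr (Or.inr ⟨w, hw, Or.inl h.zero_step⟩))
  · exact Or.inr (Or.inr (Or.inr ⟨w, hw, Or.inr h.zero_step⟩))

lemma StateInv.step (h : StateInv z n) (hv : IsU v) : StateInv (v + eβ * (eβ * z)) (n + 1) := by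
  have h2 : 2 ^ (n + 1) = 2 * 2 ^ n := by ring
  have hpos : 0 < 2 ^ n := by positivity
  unfold StateInv
  rw [h2]
  rcases h with ⟨h0, h⟩ | ⟨w, hw, h⟩ | ⟨w, hw, h⟩ | ⟨w, hw, h | h⟩
  · refine Or.inr (Or.inl ⟨0, by rw [h0]; norm_num, ?_⟩)
    rcases h.step hv (C1 := 1) (a1 := 0) (b1 := 0) (by omega) (by omega) (by omega) (by omega)
      (by omega) (by omega) with h | h <;>
    exact h.mono (by omega) (by omega) (by omega) (by omega)
  · refine Or.inr (Or.inr (Or.inl ⟨2 * w + 1, by omega, ?_⟩))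
    rcases h.step hv (C1 := 8 * w + 3) (a1 := 2 * w + 1) (b1 := 2 * w + 1) (by omega) (by omega)
      (by omega) (by omega) (by omega) (by omega) with h | h <;>
    exact h.mono (by omega) (by omega) (by omega) (by omega)
  · refine Or.inr (Or.inr (Or.inr ⟨w, by omega, ?_⟩))
    rcases h.step hv (C1 := 8 * w - 1) (a1 := w) (b1 := 2 * w) (by omega) (by omega)
      (by omega) (by omega) (by omega) (by omega) with h | h
    · exact Or.inl (h.mono (by omega) (by omega) (by omega) (by omega))
    · exact Or.inr (h.mono (by omega) (by omega) (by omega) (by omega))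
  · refine Or.inr (Or.inl ⟨4 * w - 1, by omega, ?_⟩)
    rcases h.step hv (C1 := 16 * w - 3) (a1 := 4 * w - 1) (b1 := 4 * w - 1) (by omega) (by omega)
      (by omega) (by omega) (by omega) (by omega) with h | h <;>
    exact h.mono (by omega) (by omega) (by omega) (by omega)
  · refine Or.inr (Or.inl ⟨4 * w - 1, by omega, ?_⟩)
    rcases h.step hv (C1 := 16 * w - 3) (a1 := 4 * w - 1) (b1 := 4 * w - 1) (by omega) (by omega)
      (by omega) (by omega) (by omega) (by omega) with h | h <;>
    exact h.mono (by omega) (by omega) (by omega) (by omega)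

lemma inv_nil : StateInv 0 0 := by
  refine Or.inl ⟨rfl, ⟨zero_mem _, by omega, by omega⟩, by simpa using R_nil, 1, ⟨0, by simp⟩, ?_⟩
  simp [M]

lemma naf_tail {d : ℂ} {l : List ℂ} (h : eNAF 2 (d :: l)) : eNAF 2 l := by
  intro j k hjk hk hj
  have := h (j + 1) (k + 1) (by omega) (by omega) (by simpa using hj)
  simpa using this

lemma inv_naf : ∀ l : List ℂ, (∀ d ∈ l, d ∈ eD) → eNAF 2 l → StateInv (evalE l) (eweight l)
  | [], _, _ => by rw [eweight_nil]; exact inv_nil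
  | [d], hd, _ => by
    rcases digit_cases (hd d (by simp)) with h | h
    · subst h
      rw [eweight_zero_cons, evalE_cons, zero_add, eweight_nil]
      exact inv_nil.zero_step
    · rw [eweight_cons h.ne, eweight_nil]
      have := inv_nil.step h
      rw [mul_zero] at this
      exact this
  | d :: e :: l, hd, hn => by
    rcases digit_cases (hd d (by simp)) with h | h
    · subst h
      rw [eweight_zero_cons, evalE_cons, zero_add]
      exact (inv_naf (e :: l) (fun a ha => hd a (List.mem_cons_of_mem _ ha))
        (naf_tail hn)).zero_step
    · have he : e = 0 := by
        have := hn 0 1 (by omega) (by omega) (by simpa using h.ne)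
        simpa using this
      subst he
      rw [eweight_cons h.ne, eweight_zero_cons, evalE_cons, evalE_cons, zero_add]
      exact (inv_naf l (fun a ha => hd a (by simp [ha])) (naf_tail (naf_tail hn))).step h

lemma StateInv.bound (h : StateInv z n) : LB z n ∧ R z n ≤ (sseq n : ℕ) := by
  have q {x y : ℕ} (h : x ≤ y) : (x : ℕ∞) ≤ y := by exact_mod_cast h
  unfold sseq
  rcases h with ⟨h0, h⟩ | ⟨w, hw, h⟩ | ⟨w, hw, h⟩ | ⟨w, hw, h | h⟩
  · subst h0; exact ⟨h.lb, h.cnt.trans (q (by norm_num))⟩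
  all_goals exact ⟨h.lb, h.cnt.trans (q (by omega))⟩

/-- If the 2-NAF representation of an Eisenstein integer `x` has exactly
`N ≥ 1` nonzero digits, then `x` has at most `s_N` optimal representations. -/
theorem stmt14 (N : ℕ) (hN : 1 ≤ N) (x : ℂ) (hx : x ∈ EisZ) (l : List ℂ)
    (hrep : eIsRep x l) (hnaf : eNAF 2 l) (hw : eweight l = N) :
    enumOpt x ≤ sseq N := by
  have hI := inv_naf l hrep.1 hnaf
  rw [hrep.2, hw] at hI
  obtain ⟨hl, hb⟩ := hI.bound
  have hsub : {l' | eOptimal x l'} ⊆ RS x N := by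
    rintro l' ⟨hr, hn, hmin⟩
    refine ⟨hr, hn, le_antisymm (hw ▸ hmin l hrep) ?_⟩
    by_contra! hlt
    -- A representation lighter than the 2-NAF would contradict `hl`.
    have := hl.self _ hlt
    rw [R, Set.encard_eq_zero] at this
    have hmem : l' ∈ RS x (eweight l') := ⟨hr, hn, rfl⟩
    rw [this] at hmem
    exact hmem
  have h1 : {l' | eOptimal x l'}.encard ≤ (sseq N : ℕ) := (Set.encard_le_encard hsub).trans hb
  have h2 : {l' | eOptimal x l'}.ncard ≤ sseq N := by
    rw [Set.ncard]
    exact ENat.toNat_le_of_le_natCast h1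
  exact h2
end
end
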